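/- Let p = c² − 32d² be a prime with p ≡ 1 (mod 8), c,d > 0, π = c + 4d√2, and let K = ℚ(√(−π)) ⊂ ℂ, the quartic number field generated by a root of X⁴ + 2cX² + p (so K ⊇ ℚ(√2)). Then the 2-Sylow subgroup of Cl(K) is cyclic, and its order h satisfies: h = 1 if (2/p)₄ = −(p/2)₄; h = 2 if (2/p)₄ = (p/2)₄ = −1; and h ≥ 4 if (2/p)₄ = (p/2)₄ = 1. -/

import Mathlib

/-!
Put `π = c + 4d√2`, so that `N(π) = p`, and let `O` be the ring of integers of `K`, with complex
conjugation `σ` over the principal ideal domain `ℤ[√2]`. Everything about `O` is deduced from the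
structure `CMData`: `ℤ[√2] ⊆ O` is the ring of `σ`-invariants, and `O` contains `Z = √(-π)` with
`σ Z = -Z`.

*Classes of order two.* In `ℤ[√2]` every totally positive unit is a square, since `1 + √2` has
norm `-1`. As `I σ(I)` is generated by an element of `ℤ[√2]`, a Hilbert 90 argument shows that every
class `g` with `g² = 1` contains an ideal whose square is generated by a squarefree element of
`ℤ[√2]` (`CMData.exists_squarefree`). Such an ideal is a product of ramified primes, and the only
primes of `ℤ[√2]` that can ramify are `π`, which becomes the square of the principal ideal `(Z)`,
and `√2`, which ramifies exactly if `c ≡ 1 (mod 4)` (`CMData.two_torsion`,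
`CMData.exists_sq_eq_sqrt_two`). In that case `(√2) = J²`, and `J` is not principal, because the
units of relative norm one are `±1` (`CMData.not_principal`). So the 2-torsion of the class group is
trivial for `c ≡ 3 (mod 4)` and is `{1, [J]}` for `c ≡ 1 (mod 4)`; in both cases the Sylow
2-subgroup is cyclic.

*Is `[J]` a square?* Since `J σ(J) = (√2)` and `2 + √2 = √2 (1 + √2)` is, up to squares of units, the
only totally positive associate of `√2`, the class of `J` is a square if and only if `2 + √2` is a
relative norm from `K`, that is `x² + πe² = (2 + √2)y²` has a solution with `y ≠ 0`. This forces
`2 + √2` to be a square modulo `π` (`CMData.not_sq`). Conversely, if `2 + √2` is a square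
modulo `π`, Minkowski's convex body theorem gives `v² - (2 + √2)u² = κπ` with `|N(κ)| < 12`. The
possible `κ` are units times powers of `√2`; all of these are norms from
`ℚ(√(2 + √2))`, hence so is `-π`, which is the required equation (`isForm_neg_of_isSquare`,
`CMData.exists_sq_eq_cls`).

*Symbols.* Reciprocity for Jacobi symbols gives `(2/p)₄ = (-2/c)`, that `2 + √2` is a square modulo
`π` if and only if `c ≡ ±1 (mod 8)`, and `(p/2)₄ = (2/c)`. So the three cases of the theorem are
`c ≡ 3 (mod 4)`, `c ≡ 5 (mod 8)` and `c ≡ 1 (mod 8)`.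
-/

/- STATEMENT 13: Let p = c² − 32d² be prime, p ≡ 1 (mod 8), c,d > 0, π = c + 4d√2, and
K = ℚ(√(−π)) ⊂ ℂ (the quartic field generated by a square root z of −π, a root of
X⁴ + 2cX² + p). Then the 2-Sylow subgroup of Cl(K) is cyclic of order h with:
h = 1 if (2/p)₄ = −(p/2)₄; h = 2 if (2/p)₄ = (p/2)₄ = −1; h ≥ 4 if (2/p)₄ = (p/2)₄ = 1. -/

open Complex NumberField IntermediateField nonZeroDivisors

noncomputable section

/-- K = ℚ(√(−π)) = ℚ(z) as a subfield of ℂ, where z² = −π. -/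
def Kfield (z : ℂ) : IntermediateField ℚ ℂ := ℚ⟮z⟯

/-! ### Arithmetic of `ℤ[√2]` -/

lemma two_ne_sq (n : ℤ) : (2 : ℤ) ≠ n * n := by
  intro h
  have h1 : n < 2 := by nlinarith
  have h2 : -2 < n := by nlinarith
  interval_cases n <;> omega

lemma norm_eq_zero_iff_two (a : ℤ√2) : a.norm = 0 ↔ a = 0 :=
  Zsqrtd.norm_eq_zero two_ne_sq a

instance isDomain_zsqrt_two : IsDomain (ℤ√2) := by
  have : NoZeroDivisors (ℤ√2) := ⟨by
    intro a b h
    have := congrArg Zsqrtd.norm h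
    rw [Zsqrtd.norm_mul, Zsqrtd.norm_zero, mul_eq_zero] at this
    simpa only [norm_eq_zero_iff_two] using this⟩
  exact NoZeroDivisors.to_isDomain _

/-- Division with remainder for the absolute value of the norm: round both coordinates of the
exact quotient; the error `u + v√2` has `|u|, |v| ≤ 1/2`, hence `|u² - 2v²| ≤ 1/2`. -/
lemma exists_norm_lt (a b : ℤ√2) (hb : b ≠ 0) :
    ∃ q : ℤ√2, (a - b * q).norm.natAbs < b.norm.natAbs := by
  have hn : b.norm ≠ 0 := fun h => hb ((norm_eq_zero_iff_two b).1 h)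
  set w : ℤ√2 := a * star b with hw
  set n : ℤ := b.norm with hndef
  set x : ℚ := (w.re : ℚ) / n with hx
  set y : ℚ := (w.im : ℚ) / n with hy
  refine ⟨⟨round x, round y⟩, ?_⟩
  set q : ℤ√2 := ⟨round x, round y⟩ with hq
  have hnq : (n : ℚ) ≠ 0 := by exact_mod_cast hn
  have key : ((a - b * q).norm : ℚ) * n = n ^ 2 * ((x - round x) ^ 2 - 2 * (y - round y) ^ 2) := by
    have h1 : (a - b * q).norm * n = (w - (n : ℤ√2) * q).norm := by
      have : (w - (n : ℤ√2) * q) = (a - b * q) * star b := by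
        rw [hndef, Zsqrtd.norm_eq_mul_conj, hw]; ring
      rw [this, Zsqrtd.norm_mul, Zsqrtd.norm_conj]
    have h2 : ((a - b * q).norm : ℚ) * n = ((w - (n : ℤ√2) * q).norm : ℚ) := by
      exact_mod_cast h1
    rw [h2, Zsqrtd.norm_def]
    simp only [Zsqrtd.re_sub, Zsqrtd.im_sub, Zsqrtd.re_smul, Zsqrtd.im_smul, hq]
    push_cast
    have e1 : (w.re : ℚ) = n * x := by rw [hx]; field_simp
    have e2 : (w.im : ℚ) = n * y := by rw [hy]; field_simp
    rw [e1, e2]; ring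
  have hu := abs_sub_round x
  have hv := abs_sub_round y
  rw [abs_le] at hu hv
  have e3 : ((a - b * q).norm : ℚ) = n * ((x - round x) ^ 2 - 2 * (y - round y) ^ 2) := by
    have : ((a - b * q).norm : ℚ) * n = (n * ((x - round x) ^ 2 - 2 * (y - round y) ^ 2)) * n := by
      rw [key]; ring
    exact mul_right_cancel₀ hnq this
  have e4 : |((a - b * q).norm : ℚ)| < |(n : ℚ)| := by
    rw [e3, abs_mul]
    have : |(x - round x) ^ 2 - 2 * (y - round y) ^ 2| < 1 := by
      rw [abs_lt]; constructor <;> nlinarith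
    have hpos : 0 < |(n : ℚ)| := abs_pos.2 hnq
    nlinarith
  have e5 : |(a - b * q).norm| < |n| := by exact_mod_cast e4
  rw [Int.abs_eq_natAbs, Int.abs_eq_natAbs] at e5
  exact_mod_cast e5

/-- The Euclidean structure on `ℤ[√2]`, only used to see that every ideal is principal. -/
@[reducible] def euclideanZsqrtTwo : EuclideanDomain (ℤ√2) :=
  { Zsqrtd.commRing, Zsqrtd.nontrivial with
    quotient := fun a b => by
      classical exact if h : b = 0 then 0 else Classical.choose (exists_norm_lt a b h)
    remainder := fun a b => by
      classical exact a - b * (if h : b = 0 then 0 else Classical.choose (exists_norm_lt a b h))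
    quotient_zero := fun a => by simp
    quotient_mul_add_remainder_eq := fun a b => by simp
    r := _
    r_wellFounded := (measure (Int.natAbs ∘ Zsqrtd.norm)).wf
    remainder_lt := fun a b hb => by
      have := Classical.choose_spec (exists_norm_lt a b hb)
      simp only [dif_neg hb]
      exact this
    mul_left_not_lt := fun a b hb => by
      have hn : b.norm ≠ 0 := fun h => hb ((norm_eq_zero_iff_two b).1 h)
      simp only [WellFoundedRelation.rel, InvImage, Function.comp, Zsqrtd.norm_mul,
        Int.natAbs_mul, not_lt]
      exact Nat.le_mul_of_pos_right _ (Int.natAbs_pos.2 hn) }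

instance isPrincipalIdealRing_zsqrt_two : IsPrincipalIdealRing (ℤ√2) :=
  @EuclideanDomain.to_principal_ideal_domain _ euclideanZsqrtTwo

/-- The first real place `a + b√2 ↦ a + b√2`. -/
def realPlace : ℤ√2 →+* ℝ := Zsqrtd.lift ⟨Real.sqrt 2, by simp⟩

/-- The second real place `a + b√2 ↦ a - b√2`. -/
def realPlace' : ℤ√2 →+* ℝ := Zsqrtd.lift ⟨-Real.sqrt 2, by simp⟩

lemma realPlace_apply (a : ℤ√2) : realPlace a = a.re + a.im * Real.sqrt 2 := by
  simp [realPlace]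

lemma realPlace'_apply (a : ℤ√2) : realPlace' a = a.re - a.im * Real.sqrt 2 := by
  simp [realPlace', sub_eq_add_neg]

lemma realPlace_injective : Function.Injective realPlace := Zsqrtd.lift_injective _ two_ne_sq

lemma realPlace'_injective : Function.Injective realPlace' := Zsqrtd.lift_injective _ two_ne_sq

lemma norm_eq_realPlace_mul (a : ℤ√2) : (a.norm : ℝ) = realPlace a * realPlace' a := by
  have h2 : Real.sqrt 2 ^ 2 = 2 := by simp
  rw [realPlace_apply, realPlace'_apply, Zsqrtd.norm_def]
  push_cast
  linear_combination (-(a.im : ℝ) ^ 2) * (-h2)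

/-- Positivity at both real places. -/
def TotPos (a : ℤ√2) : Prop := 0 < realPlace a ∧ 0 < realPlace' a

lemma TotPos.norm_pos {a : ℤ√2} (h : TotPos a) : 0 < a.norm := by
  have : (0 : ℝ) < a.norm := by rw [norm_eq_realPlace_mul]; exact mul_pos h.1 h.2
  exact_mod_cast this

lemma TotPos.re_pos {a : ℤ√2} (h : TotPos a) : 0 < a.re := by
  obtain ⟨h1, h2⟩ := h
  rw [realPlace_apply] at h1
  rw [realPlace'_apply] at h2
  have : (0 : ℝ) < a.re := by linarith
  exact_mod_cast this

lemma totPos_of_re_pos {a : ℤ√2} (h1 : 0 < a.re) (h2 : 0 < a.norm) : TotPos a := by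
  have h3 : (0 : ℝ) < realPlace a * realPlace' a := by
    rw [← norm_eq_realPlace_mul]; exact_mod_cast h2
  have h4 : realPlace a + realPlace' a = 2 * a.re := by
    rw [realPlace_apply, realPlace'_apply]; ring
  have h5 : (0 : ℝ) < a.re := by exact_mod_cast h1
  rcases pos_and_pos_or_neg_and_neg_of_mul_pos h3 with h | h
  · exact h
  · linarith [h.1, h.2]

lemma TotPos.of_mul {a b : ℤ√2} (hab : TotPos (a * b)) (hb : TotPos b) : TotPos a := by
  obtain ⟨h1, h2⟩ := hab
  rw [map_mul] at h1 h2
  exact ⟨(pos_iff_pos_of_mul_pos h1).2 hb.1, (pos_iff_pos_of_mul_pos h2).2 hb.2⟩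

lemma TotPos.mul {a b : ℤ√2} (ha : TotPos a) (hb : TotPos b) : TotPos (a * b) := by
  constructor
  · rw [map_mul]; exact mul_pos ha.1 hb.1
  · rw [map_mul]; exact mul_pos ha.2 hb.2

lemma totPos_sq {a : ℤ√2} (ha : a ≠ 0) : TotPos (a ^ 2) := by
  constructor
  · rw [map_pow]
    exact pow_pos_of_ne_zero_sq ((map_ne_zero_iff _ realPlace_injective).2 ha)
  · rw [map_pow]
    exact pow_pos_of_ne_zero_sq ((map_ne_zero_iff _ realPlace'_injective).2 ha)
where
  pow_pos_of_ne_zero_sq {x : ℝ} (hx : x ≠ 0) : 0 < x ^ 2 := by positivity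

lemma isUnit_iff_norm (u : ℤ√2) : IsUnit u ↔ u.norm = 1 ∨ u.norm = -1 := by
  rw [Zsqrtd.isUnit_iff_norm_isUnit, Int.isUnit_iff]

/-- The fundamental solution `3 + 2√2 = (1 + √2)²` of the Pell equation for `2`. -/
def pellTwo : Pell.Solution₁ 2 := Pell.Solution₁.mk 3 2 (by norm_num)

lemma pellTwo_isFundamental : Pell.IsFundamental pellTwo := by
  refine ⟨by simp [pellTwo], by simp [pellTwo], fun {b} hb => ?_⟩
  have hp := b.prop
  simp only [pellTwo, Pell.Solution₁.x_mk]
  by_contra! h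
  have h2 : b.x = 2 := by omega
  rw [h2] at hp
  omega

/-- A unit of norm `1` is up to sign an even power of `1 + √2`. -/
lemma exists_sq_of_norm_one {u : ℤ√2} (hu : u.norm = 1) :
    ∃ w : ℤ√2, IsUnit w ∧ (u = w ^ 2 ∨ u = -w ^ 2) := by
  have h : u.re ^ 2 - 2 * u.im ^ 2 = 1 := by
    rw [Zsqrtd.norm_def] at hu; linarith
  obtain ⟨n, hn⟩ := pellTwo_isFundamental.eq_zpow_or_neg_zpow (Pell.Solution₁.mk u.re u.im h)
  have hε : IsUnit (⟨1, 1⟩ : ℤ√2) := by rw [isUnit_iff_norm]; right; rfl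
  obtain ⟨e, he⟩ := hε
  refine ⟨((e ^ n : (ℤ√2)ˣ) : ℤ√2), Units.isUnit _, ?_⟩
  let f : Pell.Solution₁ 2 →* ℤ√2 := (Submonoid.subtype _)
  have key : ∀ n : ℤ, f (pellTwo ^ n) = ((e ^ n : (ℤ√2)ˣ) : ℤ√2) ^ 2 := by
    intro n
    have h1 : f.toHomUnits pellTwo = e ^ 2 := by
      ext1
      rw [MonoidHom.coe_toHomUnits, Units.val_pow_eq_pow_val, he]
      rfl
    have h2 : f (pellTwo ^ n) = ((f.toHomUnits (pellTwo ^ n) : (ℤ√2)ˣ) : ℤ√2) :=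
      (MonoidHom.coe_toHomUnits f _).symm
    rw [h2, map_zpow, h1, ← Units.val_pow_eq_pow_val]
    congr 1
    rw [← zpow_natCast, ← zpow_natCast, zpow_comm]
  have hu' : f (Pell.Solution₁.mk u.re u.im h) = u := rfl
  rcases hn with hn | hn
  · left; rw [← key, ← hn, hu']
  · right
    have : f (-pellTwo ^ n) = - f (pellTwo ^ n) := rfl
    rw [← key, ← this, ← hn, hu']

/-- Totally positive units are squares, because `1 + √2` has norm `-1`. -/
lemma TotPos.exists_sq {u : ℤ√2} (h : TotPos u) (hu : IsUnit u) :
    ∃ w : ℤ√2, IsUnit w ∧ u = w ^ 2 := by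
  have h1 : u.norm = 1 := by
    rcases (isUnit_iff_norm u).1 hu with h1 | h1
    · exact h1
    · have := h.norm_pos; omega
  obtain ⟨w, hw, h2 | h2⟩ := exists_sq_of_norm_one h1
  · exact ⟨w, hw, h2⟩
  · have h3 := (totPos_sq hw.ne_zero).1
    have h4 := h.1
    rw [h2, map_neg] at h4
    linarith

/-- `√2 u` is totally positive only if it is `2 + √2` up to the square of a unit. -/
lemma exists_sq_of_totPos_sqrt_mul {u : ℤ√2} (hu : IsUnit u) (h : TotPos (⟨0, 1⟩ * u)) :
    ∃ w : ℤ√2, IsUnit w ∧ ⟨0, 1⟩ * u = ⟨2, 1⟩ * w ^ 2 := by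
  have hε : (⟨1, 1⟩ * ⟨-1, 1⟩ : ℤ√2) = 1 := rfl
  have h1 : (⟨0, 1⟩ * u : ℤ√2) = ⟨2, 1⟩ * (⟨-1, 1⟩ * u) := by
    have : (⟨2, 1⟩ : ℤ√2) = ⟨0, 1⟩ * ⟨1, 1⟩ := rfl
    rw [this]; linear_combination (-(⟨0, 1⟩ : ℤ√2) * u) * hε
  have h2 : TotPos (⟨2, 1⟩ : ℤ√2) := totPos_of_re_pos (by norm_num) (by decide)
  have h3 : TotPos (⟨-1, 1⟩ * u : ℤ√2) := by
    refine TotPos.of_mul (b := ⟨2, 1⟩) ?_ h2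
    rwa [mul_comm, ← h1]
  obtain ⟨w, hw, hw2⟩ := h3.exists_sq ((IsUnit.of_mul_eq_one_right _ hε).mul hu)
  exact ⟨w, hw, by rw [h1, hw2]⟩

lemma prime_of_norm_natAbs_prime {a : ℤ√2} (h : a.norm.natAbs.Prime) : Prime a := by
  rw [← irreducible_iff_prime]
  refine ⟨fun hu => ?_, fun x y hxy => ?_⟩
  · rw [← Zsqrtd.norm_eq_one_iff] at hu
    rw [hu] at h; exact Nat.not_prime_one h
  · rw [hxy, Zsqrtd.norm_mul, Int.natAbs_mul] at h
    rw [← Zsqrtd.norm_eq_one_iff, ← Zsqrtd.norm_eq_one_iff]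
    exact (Nat.prime_mul_iff.1 h).elim (fun h => Or.inr h.2) (fun h => Or.inl h.2)

lemma prime_sqrt_two : Prime (⟨0, 1⟩ : ℤ√2) :=
  prime_of_norm_natAbs_prime (by
    have : (⟨0, 1⟩ : ℤ√2).norm.natAbs = 2 := rfl
    rw [this]; exact Nat.prime_two)

lemma sqrt_two_dvd_iff (a : ℤ√2) : (⟨0, 1⟩ : ℤ√2) ∣ a ↔ 2 ∣ a.re := by
  constructor
  · rintro ⟨b, rfl⟩
    simp
  · rintro ⟨k, hk⟩
    exact ⟨⟨a.im, k⟩, by ext <;> simp [hk]⟩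

lemma sqrt_two_sq : (⟨0, 1⟩ : ℤ√2) ^ 2 = 2 := rfl

lemma exists_squarefree_part (τ : ℤ√2) (hτ : τ ≠ 0) :
    ∃ s k : ℤ√2, Squarefree s ∧ τ = k ^ 2 * s := by
  induction hN : τ.norm.natAbs using Nat.strong_induction_on generalizing τ with
  | _ N ih =>
    by_cases hs : Squarefree τ
    · exact ⟨τ, 1, hs, by ring⟩
    · simp only [Squarefree, not_forall] at hs
      obtain ⟨x, ⟨τ', rfl⟩, hxu⟩ := hs
      have hτ' : τ' ≠ 0 := right_ne_zero_of_mul hτ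
      have hx : x ≠ 0 := by
        rintro rfl
        exact hτ (by ring)
      have h1 : 1 < x.norm.natAbs := by
        have h2 : x.norm.natAbs ≠ 1 := fun h => hxu (Zsqrtd.norm_eq_one_iff.1 h)
        have h3 : x.norm ≠ 0 := fun h => hx ((norm_eq_zero_iff_two x).1 h)
        omega
      have h4 : 0 < τ'.norm.natAbs :=
        Int.natAbs_pos.2 fun h => hτ' ((norm_eq_zero_iff_two τ').1 h)
      have hlt : τ'.norm.natAbs < N := by
        rw [← hN, Zsqrtd.norm_mul, Zsqrtd.norm_mul, Int.natAbs_mul, Int.natAbs_mul]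
        exact lt_mul_of_one_lt_left h4 (Nat.one_lt_mul_iff.2 ⟨by omega, by omega, Or.inl h1⟩)
      obtain ⟨s, k, hs, hk⟩ := ih _ hlt τ' hτ' rfl
      exact ⟨s, x * k, hs, by rw [hk]; ring⟩

/-! ### Ideal classes of a quadratic extension of `ℤ[√2]` -/

/-- If `w / g` is a root of a monic quadratic polynomial over an integrally closed domain,
then `g` divides `w`. -/
lemma dvd_of_quadratic {O : Type*} [CommRing O] [IsDomain O] [IsIntegrallyClosed O]
    {g w a b : O} (hg : g ≠ 0) (h : w ^ 2 - g * a * w + g ^ 2 * b = 0) : g ∣ w := by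
  have hg' : algebraMap O (FractionRing O) g ≠ 0 := by
    rwa [Ne, FaithfulSMul.algebraMap_eq_zero_iff]
  have hInt : IsIntegral O (algebraMap O (FractionRing O) w / algebraMap O (FractionRing O) g) := by
    refine ⟨Polynomial.X ^ 2 - Polynomial.C a * Polynomial.X + Polynomial.C b, ?_, ?_⟩
    · monicity!
    · have h' := congrArg (algebraMap O (FractionRing O)) h
      simp only [map_add, map_sub, map_mul, map_pow, map_zero] at h'
      simp only [Polynomial.eval₂_add, Polynomial.eval₂_sub, Polynomial.eval₂_mul,
        Polynomial.eval₂_pow, Polynomial.eval₂_X, Polynomial.eval₂_C]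
      field_simp
      linear_combination h'
  obtain ⟨y, hy⟩ := IsIntegrallyClosed.isIntegral_iff.1 hInt
  refine ⟨y, IsFractionRing.injective O (FractionRing O) ?_⟩
  rw [map_mul, hy]
  field_simp

/-- The class of a nonzero ideal. -/
def cls {O : Type*} [CommRing O] [IsDedekindDomain O] (I : Ideal O) (hI : I ≠ ⊥) :
    ClassGroup O :=
  ClassGroup.mk0 ⟨I, mem_nonZeroDivisors_iff_ne_zero.2 hI⟩

section cls
variable {O : Type*} [CommRing O] [IsDedekindDomain O]

lemma cls_mul {I J : Ideal O} (hI : I ≠ ⊥) (hJ : J ≠ ⊥) (hIJ : I * J ≠ ⊥) :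
    cls (I * J) hIJ = cls I hI * cls J hJ := by
  rw [cls, cls, cls, ← map_mul]; rfl

lemma cls_eq_one_iff {I : Ideal O} (hI : I ≠ ⊥) : cls I hI = 1 ↔ ∃ x, I = Ideal.span {x} := by
  rw [cls, ClassGroup.mk0_eq_one_iff]
  exact ⟨fun h => ⟨_, (Ideal.span_singleton_generator I).symm⟩, fun ⟨x, hx⟩ => ⟨⟨x, hx⟩⟩⟩

lemma cls_span {x : O} (hx : Ideal.span {x} ≠ ⊥) : cls (Ideal.span {x}) hx = 1 :=
  (cls_eq_one_iff hx).2 ⟨x, rfl⟩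

lemma cls_surjective (g : ClassGroup O) : ∃ (I : Ideal O) (hI : I ≠ ⊥), cls I hI = g := by
  obtain ⟨⟨I, hI⟩, h⟩ := ClassGroup.mk0_surjective g
  exact ⟨I, mem_nonZeroDivisors_iff_ne_zero.1 hI, h⟩

lemma cls_eq_cls_iff {I J : Ideal O} (hI : I ≠ ⊥) (hJ : J ≠ ⊥) :
    cls I hI = cls J hJ ↔
      ∃ x y : O, x ≠ 0 ∧ y ≠ 0 ∧ Ideal.span {x} * I = Ideal.span {y} * J := by
  rw [cls, cls, ClassGroup.mk0_eq_mk0_iff]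
  exact ⟨fun ⟨x, y, hx, hy, h⟩ => ⟨x, y, hx, hy, h⟩, fun ⟨x, y, hx, hy, h⟩ => ⟨x, y, hx, hy, h⟩⟩

/-- An ideal of a Dedekind domain has at most one square root. -/
lemma ideal_eq_of_sq_eq {I J : Ideal O} (h : I ^ 2 = J ^ 2) : I = J := by
  have h1 : I ∣ J := (UniqueFactorizationMonoid.pow_dvd_pow_iff_dvd two_ne_zero).1 (dvd_of_eq h)
  have h2 : J ∣ I := (UniqueFactorizationMonoid.pow_dvd_pow_iff_dvd two_ne_zero).1 (dvd_of_eq h.symm)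
  exact dvd_antisymm h1 h2

end cls

/-- The structure carried by the ring of integers `O` of `ℚ(√2, √(-π))` with `π = c + 4d√2`:
the inclusion `ι` of `ℤ[√2]`, the nontrivial automorphism `σ` over `ℚ(√2)`, and the square root
`Z` of `-π`. Only elements of `ℤ[√2]` are fixed by `σ`. -/
structure CMData (O : Type*) [CommRing O] (c d : ℤ) where
  ι : ℤ√2 →+* O
  σ : O ≃+* O
  Z : O
  ι_inj : Function.Injective ι
  σ_σ : ∀ x, σ (σ x) = x
  σ_ι : ∀ a, σ (ι a) = ι a
  σ_Z : σ Z = -Z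
  Z_sq : Z ^ 2 = -ι ⟨c, 4 * d⟩
  fixed : ∀ x, σ x = x → ∃ a, ι a = x

namespace CMData

variable {O : Type*} [CommRing O] [IsDedekindDomain O] {c d : ℤ} (D : CMData O c d)

set_option linter.unusedSectionVars false

lemma ι_ne_zero {a : ℤ√2} (ha : a ≠ 0) : D.ι a ≠ 0 := (map_ne_zero_iff _ D.ι_inj).2 ha

lemma exists_trace (x : O) : ∃ t, D.ι t = x + D.σ x :=
  D.fixed _ (by rw [map_add, D.σ_σ, add_comm])

lemma exists_norm (x : O) : ∃ n, D.ι n = x * D.σ x :=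
  D.fixed _ (by rw [map_mul, D.σ_σ, mul_comm])

lemma Z_ne_zero (hπ : Prime (⟨c, 4 * d⟩ : ℤ√2)) : D.Z ≠ 0 := by
  intro h
  have := D.Z_sq
  rw [h, zero_pow two_ne_zero, eq_comm, neg_eq_zero] at this
  exact D.ι_ne_zero hπ.ne_zero this

lemma dvd_of_ι_dvd {a b : ℤ√2} (h : D.ι a ∣ D.ι b) : a ∣ b := by
  obtain ⟨y, hy⟩ := h
  rcases eq_or_ne a 0 with rfl | ha
  · rw [map_zero, zero_mul, ← map_zero D.ι] at hy
    exact dvd_of_eq (D.ι_inj hy).symm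
  have hσ : D.σ y = y := by
    have h1 := congrArg D.σ hy
    rw [map_mul, D.σ_ι, D.σ_ι, hy] at h1
    exact (mul_left_cancel₀ (D.ι_ne_zero ha) h1).symm
  obtain ⟨b', rfl⟩ := D.fixed y hσ
  exact ⟨b', D.ι_inj (by rw [hy, map_mul])⟩

lemma associated_of_span_eq {a b : ℤ√2} (h : Ideal.span {D.ι a} = Ideal.span {D.ι b}) :
    Associated a b := by
  rw [Ideal.span_singleton_eq_span_singleton] at h
  exact associated_of_dvd_dvd (D.dvd_of_ι_dvd h.dvd) (D.dvd_of_ι_dvd h.symm.dvd)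

/-- Coordinates: every `x` is `(t + sZ)/2` with `t, s ∈ ℤ[√2]`, and its relative norm `n`
satisfies `4n = t² + πs²`. Integrality of `s` uses that `π` is prime. -/
lemma exists_coords (hπ : Prime (⟨c, 4 * d⟩ : ℤ√2)) (x : O) :
    ∃ t s n : ℤ√2, 2 * x = D.ι t + D.ι s * D.Z ∧ x + D.σ x = D.ι t ∧ x * D.σ x = D.ι n ∧
      4 * n = t ^ 2 + ⟨c, 4 * d⟩ * s ^ 2 := by
  set π : ℤ√2 := ⟨c, 4 * d⟩ with hπdef
  obtain ⟨t, ht⟩ := D.exists_trace x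
  obtain ⟨n, hn⟩ := D.exists_norm x
  obtain ⟨r, hr⟩ := D.fixed (D.Z * (x - D.σ x)) (by
    rw [map_mul, map_sub, D.σ_σ, D.σ_Z]; ring)
  have hZ := D.Z_sq
  rw [← hπdef] at hZ
  have h1 : r ^ 2 = -π * (t ^ 2 - 4 * n) := by
    apply D.ι_inj
    simp only [map_mul, map_sub, map_pow, map_neg, map_ofNat, hr, ht, hn, mul_pow, hZ]
    ring
  have h2 : π ∣ r := hπ.dvd_of_dvd_pow (n := 2) ⟨-(t ^ 2 - 4 * n), by rw [h1]; ring⟩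
  obtain ⟨s, rfl⟩ := h2
  refine ⟨t, -s, n, ?_, ht.symm, hn.symm, ?_⟩
  · apply mul_left_cancel₀ (D.Z_ne_zero hπ)
    rw [map_mul] at hr
    rw [ht, map_neg]
    linear_combination (-1) * hr + D.ι s * hZ
  · apply mul_left_cancel₀ hπ.ne_zero
    linear_combination (-1) * h1

/-- Relative norms are totally positive, since `π` is. -/
lemma norm_totPos (hπ : Prime (⟨c, 4 * d⟩ : ℤ√2)) (hpos : TotPos (⟨c, 4 * d⟩ : ℤ√2)) {x : O}
    (hx : x ≠ 0) {n : ℤ√2} (hn : x * D.σ x = D.ι n) : TotPos n := by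
  obtain ⟨t, s, n', -, -, h2, h3⟩ := D.exists_coords hπ x
  obtain rfl : n = n' := D.ι_inj (by rw [← hn, h2])
  have hn0 : n ≠ 0 := by
    rintro rfl
    rw [map_zero, mul_eq_zero] at hn
    rcases hn with h | h
    · exact hx h
    · exact hx ((map_eq_zero_iff _ D.σ.injective).1 h)
  have aux : ∀ ρ : ℤ√2 →+* ℝ, Function.Injective ρ → 0 < ρ ⟨c, 4 * d⟩ → 0 < ρ n := by
    intro ρ hρ hp
    have h4 := congrArg ρ h3
    simp only [map_mul, map_add, map_pow, map_ofNat] at h4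
    have h5 : ρ n ≠ 0 := (map_ne_zero_iff _ hρ).2 hn0
    have h6 : 0 ≤ ρ n := by
      have : 0 ≤ ρ ⟨c, 4 * d⟩ * ρ s ^ 2 := by positivity
      nlinarith [sq_nonneg (ρ t)]
    exact lt_of_le_of_ne h6 h5.symm
  exact ⟨aux _ realPlace_injective hpos.1, aux _ realPlace'_injective hpos.2⟩

lemma map_σ_ne_bot {I : Ideal O} (hI : I ≠ ⊥) : I.map (D.σ : O →+* O) ≠ ⊥ := by
  rwa [Ne, Ideal.map_eq_bot_iff_of_injective (f := (D.σ : O →+* O)) D.σ.injective]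

lemma map_σ_map_σ (I : Ideal O) : (I.map (D.σ : O →+* O)).map (D.σ : O →+* O) = I := by
  rw [Ideal.map_map]
  convert Ideal.map_id I
  ext x
  exact D.σ_σ x

lemma map_σ_span (x : O) :
    (Ideal.span {x}).map (D.σ : O →+* O) = Ideal.span {D.σ x} := by
  rw [Ideal.map_span, Set.image_singleton]; rfl

/-- The product of an ideal and its conjugate is generated by an element of `ℤ[√2]`. With
`I = (x, y)` a generator is `g = gcd(xx', xy' + x'y, yy')`: the quotient `xy'/g` is integral
because its trace and norm are. -/
lemma mul_map_σ (I : Ideal O) (hI : I ≠ ⊥) :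
    ∃ n : ℤ√2, n ≠ 0 ∧ I * I.map (D.σ : O →+* O) = Ideal.span {D.ι n} := by
  obtain ⟨x, hxI, hx⟩ := Submodule.exists_mem_ne_zero_of_ne_bot hI
  obtain ⟨y, rfl⟩ := IsDedekindDomain.exists_eq_span_pair hxI hx
  obtain ⟨n₁, hn₁⟩ := D.exists_norm x
  obtain ⟨n₂, hn₂⟩ := D.exists_norm y
  obtain ⟨t, ht⟩ := D.exists_trace (x * D.σ y)
  rw [map_mul, D.σ_σ] at ht
  obtain ⟨g, hg⟩ := (IsPrincipalIdealRing.principal (Ideal.span {n₁, t, n₂})).principal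
  rw [← Ideal.span] at hg
  have hd : ∀ a ∈ ({n₁, t, n₂} : Set (ℤ√2)), g ∣ a := fun a ha => by
    rw [← Ideal.mem_span_singleton, ← hg]; exact Ideal.subset_span ha
  obtain ⟨a₁, ha₁⟩ := hd n₁ (by simp)
  obtain ⟨a, ha⟩ := hd t (by simp)
  obtain ⟨a₂, ha₂⟩ := hd n₂ (by simp)
  have hg0 : g ≠ 0 := by
    rintro rfl
    rw [zero_mul] at ha₁
    rw [ha₁, map_zero, eq_comm, mul_eq_zero] at hn₁
    rcases hn₁ with h | h
    · exact hx h
    · exact hx ((map_eq_zero_iff _ D.σ.injective).1 h)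
  refine ⟨g, hg0, ?_⟩
  have hgd : ∀ w, w = x * D.σ y ∨ w = y * D.σ x → D.ι g ∣ w := by
    intro w hw
    apply dvd_of_quadratic (D.ι_ne_zero hg0) (a := D.ι a) (b := D.ι (a₁ * a₂))
    have e1 : D.ι g * D.ι a = x * D.σ y + D.σ x * y := by rw [← map_mul, ← ha, ht]
    have e2 : D.ι g ^ 2 * D.ι (a₁ * a₂) = (x * D.σ x) * (y * D.σ y) := by
      rw [← hn₁, ← hn₂, ha₁, ha₂]
      simp only [map_mul]; ring
    rw [e1, e2]
    rcases hw with rfl | rfl <;> ring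
  have hmap : (Ideal.span {x, y}).map (D.σ : O →+* O) = Ideal.span {D.σ x, D.σ y} := by
    rw [Ideal.map_span, Set.image_pair]; rfl
  rw [hmap, Ideal.span_pair_mul_span_pair]
  apply le_antisymm
  · rw [Ideal.span_le]
    rintro w hw
    simp only [Set.mem_insert_iff, Set.mem_singleton_iff] at hw
    rw [SetLike.mem_coe, Ideal.mem_span_singleton]
    rcases hw with rfl | rfl | rfl | rfl
    · rw [← hn₁, ha₁, map_mul]; exact dvd_mul_right _ _
    · exact hgd _ (Or.inl rfl)
    · exact hgd _ (Or.inr rfl)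
    · rw [← hn₂, ha₂, map_mul]; exact dvd_mul_right _ _
  · rw [Ideal.span_singleton_le_iff_mem]
    have hgm : g ∈ Ideal.span {n₁, t, n₂} := by rw [hg]; exact Ideal.mem_span_singleton_self g
    have : Ideal.map D.ι (Ideal.span {n₁, t, n₂}) ≤
        Ideal.span {x * D.σ x, x * D.σ y, y * D.σ x, y * D.σ y} := by
      rw [Ideal.map_span, Ideal.span_le]
      rintro _ ⟨b, hb, rfl⟩
      simp only [Set.mem_insert_iff, Set.mem_singleton_iff] at hb
      rcases hb with rfl | rfl | rfl
      · rw [hn₁]; exact Ideal.subset_span (by simp)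
      · rw [ht, mul_comm (D.σ x) y]
        exact Ideal.add_mem _ (Ideal.subset_span (by simp)) (Ideal.subset_span (by simp))
      · rw [hn₂]; exact Ideal.subset_span (by simp)
    exact this (Ideal.mem_map_of_mem _ hgm)

lemma cls_mul_cls_map_σ {I : Ideal O} (hI : I ≠ ⊥) :
    cls I hI * cls (I.map (D.σ : O →+* O)) (D.map_σ_ne_bot hI) = 1 := by
  obtain ⟨n, hn, h⟩ := D.mul_map_σ I hI
  have h0 : I * I.map (D.σ : O →+* O) ≠ ⊥ := mul_ne_zero hI (D.map_σ_ne_bot hI)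
  rw [← cls_mul _ _ h0, cls_eq_one_iff]
  exact ⟨_, h⟩

/-- A Hilbert 90 argument. If `I² = (γ)` and `II' = (n)`, then `γγ' = n²` after changing `n` by a
unit (totally positive units being squares), and `β = n + γ` satisfies
`β² = γ (γ + γ' + 2n)`. Removing the square part of `γ + γ' + 2n ∈ ℤ[√2]` leaves an ideal `J` in
the inverse class whose square is generated by a squarefree element of `ℤ[√2]`. -/
lemma exists_squarefree (hπ : Prime (⟨c, 4 * d⟩ : ℤ√2)) (hpos : TotPos (⟨c, 4 * d⟩ : ℤ√2))
    {I : Ideal O} (hI : I ≠ ⊥) (h : cls I hI ^ 2 = 1) :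
    ∃ (J : Ideal O) (hJ : J ≠ ⊥) (s : ℤ√2), Squarefree s ∧ J ^ 2 = Ideal.span {D.ι s} ∧
      cls I hI * cls J hJ = 1 := by
  have hII : I * I ≠ ⊥ := mul_ne_zero hI hI
  obtain ⟨γ, hγ⟩ : ∃ γ, I * I = Ideal.span {γ} := by
    rw [← cls_eq_one_iff hII, cls_mul hI hI, ← sq, h]
  have hγ0 : γ ≠ 0 := by
    rintro rfl
    exact hII (by rw [hγ]; simp)
  obtain ⟨n₀, hn₀, hIn⟩ := D.mul_map_σ I hI
  obtain ⟨m, hm⟩ := D.exists_norm γ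
  have hmpos : TotPos m := D.norm_totPos hπ hpos hγ0 hm.symm
  -- the unit comparing the norm of `γ` with `n₀ ^ 2`
  obtain ⟨u, hu⟩ : Associated (n₀ ^ 2) m := by
    apply D.associated_of_span_eq
    rw [hm, map_pow, ← Ideal.span_singleton_pow, ← hIn, ← Ideal.span_singleton_mul_span_singleton,
      ← D.map_σ_span, ← hγ, Ideal.map_mul]
    ring
  obtain ⟨w, hw, huw⟩ := (TotPos.of_mul (a := (u : ℤ√2)) (b := n₀ ^ 2)
    (by rwa [mul_comm, hu]) (totPos_sq hn₀)).exists_sq u.isUnit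
  obtain ⟨n, hn⟩ : ∃ n, n = n₀ * w := ⟨_, rfl⟩
  have hmn : m = n ^ 2 := by rw [← hu, huw, hn]; ring
  have hn0 : n ≠ 0 := by rw [hn]; exact mul_ne_zero hn₀ hw.ne_zero
  obtain ⟨β, τ, hβ, hβτ⟩ : ∃ (β : O) (τ : ℤ√2), β ≠ 0 ∧ β ^ 2 = γ * D.ι τ := by
    by_cases hb : D.ι n + γ = 0
    · refine ⟨D.ι n, -n, D.ι_ne_zero hn0, ?_⟩
      rw [map_neg]
      linear_combination D.ι n * hb
    · obtain ⟨t, ht⟩ := D.exists_trace γ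
      refine ⟨D.ι n + γ, t + 2 * n, hb, ?_⟩
      rw [map_add, ht, map_mul, map_ofNat]
      rw [hmn, map_pow] at hm
      linear_combination hm
  have hτ : τ ≠ 0 := by
    rintro rfl
    rw [map_zero, mul_zero] at hβτ
    exact hβ (pow_eq_zero_iff two_ne_zero |>.1 hβτ)
  obtain ⟨s, k, hs, hsk⟩ : ∃ s k : ℤ√2, Squarefree s ∧ τ = k ^ 2 * s := 
    exists_squarefree_part τ hτ
  have hk : k ≠ 0 := by
    rintro rfl
    exact hτ (by rw [hsk]; ring)
  have hβI : Ideal.span {β} ^ 2 = (I * Ideal.span {D.ι k}) ^ 2 * Ideal.span {D.ι s} := by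
    rw [Ideal.span_singleton_pow, hβτ, hsk, map_mul, map_pow,
      ← Ideal.span_singleton_mul_span_singleton, ← Ideal.span_singleton_mul_span_singleton,
      ← Ideal.span_singleton_pow, ← hγ]
    ring
  have hIk : I * Ideal.span {D.ι k} ≠ ⊥ :=
    mul_ne_zero hI (by simpa using D.ι_ne_zero hk)
  obtain ⟨J, hJ⟩ : I * Ideal.span {D.ι k} ∣ Ideal.span {β} :=
    (UniqueFactorizationMonoid.pow_dvd_pow_iff_dvd two_ne_zero).1 ⟨_, hβI⟩
  have hβ' : Ideal.span {β} ≠ ⊥ := by simpa using hβ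
  have hJ0 : J ≠ ⊥ := by
    rintro rfl
    exact hβ' (by rw [hJ]; simp)
  refine ⟨J, hJ0, s, hs, ?_, ?_⟩
  · apply mul_left_cancel₀ (pow_ne_zero 2 hIk)
    rw [← hβI, hJ, ← mul_pow]
  · have hk' : Ideal.span {D.ι k} ≠ ⊥ := by simpa using D.ι_ne_zero hk
    have e : cls (Ideal.span {β}) hβ' = cls (I * Ideal.span {D.ι k} * J) (hJ ▸ hβ') := by
      congr 1
    rw [cls_span, cls_mul hIk hJ0, cls_mul hI hk', cls_span, mul_one] at e
    exact e.symm

end CMData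

namespace CMData

variable {O : Type*} [CommRing O] [IsDedekindDomain O] {c d : ℤ} (D : CMData O c d)

/-! ### The ramified primes and the classes of order two -/

/-- If `(s)` is the square of an ideal, `s` squarefree, then no prime `l ∤ π` dividing `s` can have
the property that `l ∣ t, s, n` and `4n = t² + πs²` imply `l² ∣ n`: that property makes `O / (l)`
reduced. -/
lemma not_dvd_of_radical (hπ : Prime (⟨c, 4 * d⟩ : ℤ√2)) {J : Ideal O} {s l : ℤ√2}
    (hJ : J ^ 2 = Ideal.span {D.ι s}) (hs : Squarefree s) (hl : Prime l)
    (hlπ : ¬ Associated l ⟨c, 4 * d⟩)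
    (hrad : ∀ t e n : ℤ√2, l ∣ t → l ∣ e → l ∣ n → 4 * n = t ^ 2 + ⟨c, 4 * d⟩ * e ^ 2 →
      l ^ 2 ∣ n) : ¬ l ∣ s := by
  intro hls
  have key : ∀ x ∈ J, D.ι l ∣ x := by
    intro x hx
    have hx2 : x ^ 2 ∈ Ideal.span {D.ι s} := by rw [← hJ]; exact Ideal.pow_mem_pow hx 2
    rw [Ideal.mem_span_singleton] at hx2
    obtain ⟨y, hy⟩ := (map_dvd D.ι hls).trans hx2
    obtain ⟨t, e, n, -, ht, hn, h4⟩ := D.exists_coords hπ x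
    obtain ⟨ty, hty⟩ := D.exists_trace y
    obtain ⟨ny, hny⟩ := D.exists_norm y
    have hσy : D.σ x ^ 2 = D.ι l * D.σ y := by
      rw [← map_pow, hy, map_mul, D.σ_ι]
    have hln : l ∣ n := by
      apply hl.dvd_of_dvd_pow (n := 2)
      refine ⟨l * ny, D.ι_inj ?_⟩
      rw [map_pow, ← hn, map_mul, map_mul, hny, mul_pow, hy, hσy]; ring
    have hlt : l ∣ t := by
      apply hl.dvd_of_dvd_pow (n := 2)
      have : t ^ 2 = l * ty + 2 * n := by
        apply D.ι_inj
        rw [map_pow, ← ht, map_add, map_mul, map_mul, hty, ← hn, map_ofNat]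
        linear_combination hy + hσy
      rw [this]
      exact dvd_add (dvd_mul_right _ _) (hln.mul_left _)
    have hle : l ∣ e := by
      have h5 : l ∣ ⟨c, 4 * d⟩ * e ^ 2 := by
        have : (⟨c, 4 * d⟩ * e ^ 2 : ℤ√2) = 4 * n - t ^ 2 := by rw [h4]; ring
        rw [this]
        exact dvd_sub (hln.mul_left _) (hlt.pow two_ne_zero)
      rcases hl.dvd_or_dvd h5 with h | h
      · exact absurd (hl.associated_of_dvd hπ h) hlπ
      · exact hl.dvd_of_dvd_pow h
    obtain ⟨b, hb⟩ := hrad t e n hlt hle hln h4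
    obtain ⟨a, rfl⟩ := hlt
    refine dvd_of_quadratic (D.ι_ne_zero hl.ne_zero) (a := D.ι a) (b := D.ι b) ?_
    rw [← map_mul, ← ht, ← map_pow, ← map_mul, ← hb, ← hn]
    ring
  have hJl : J ≤ Ideal.span {D.ι l} := fun x hx => Ideal.mem_span_singleton.2 (key x hx)
  have h1 : Ideal.span {D.ι s} ≤ Ideal.span {D.ι l} ^ 2 := by
    rw [← hJ]; exact Ideal.pow_right_mono hJl 2
  rw [Ideal.span_singleton_pow, Ideal.span_singleton_le_span_singleton, ← map_pow] at h1
  have h2 := D.dvd_of_ι_dvd h1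
  rw [sq] at h2
  exact hl.not_isUnit (hs _ h2)

/-- Only `π` and, unless `c ≡ 3 (mod 4)`, `√2` ramify. -/
lemma associated_of_dvd (hπ : Prime (⟨c, 4 * d⟩ : ℤ√2)) {J : Ideal O} {s l : ℤ√2}
    (hJ : J ^ 2 = Ideal.span {D.ι s}) (hs : Squarefree s) (hl : Prime l) (hls : l ∣ s) :
    Associated l ⟨c, 4 * d⟩ ∨ (Associated l ⟨0, 1⟩ ∧ c % 4 ≠ 3) := by
  by_contra! hcon
  obtain ⟨h1, h2⟩ := hcon
  by_cases h3 : Associated l ⟨0, 1⟩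
  · have hc := h2 h3
    have hs2 : (⟨0, 1⟩ : ℤ√2) ∣ s := h3.symm.dvd.trans hls
    refine D.not_dvd_of_radical hπ hJ hs prime_sqrt_two (fun h => h1 (h3.trans h)) ?_ hs2
    rintro _ _ n ⟨t, rfl⟩ ⟨e, rfl⟩ hn h4
    rw [sqrt_two_dvd_iff] at hn
    have hn' : 2 * n = t ^ 2 + ⟨c, 4 * d⟩ * e ^ 2 := by
      have h20 : (2 : ℤ√2) ≠ 0 := two_ne_zero
      apply mul_left_cancel₀ h20
      linear_combination h4 + (t ^ 2 + ⟨c, 4 * d⟩ * e ^ 2) * sqrt_two_sq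
    rw [sqrt_two_sq]
    have hr := congrArg Zsqrtd.re hn'
    have hi := congrArg Zsqrtd.im hn'
    simp [sq] at hr hi
    have goal : (2 : ℤ) ∣ n.re ∧ (2 : ℤ) ∣ n.im := by
      refine ⟨hn, ?_⟩
      obtain ⟨k, hk⟩ := hn
      obtain ⟨q, hq⟩ : ∃ q, c = 4 * q + 3 := ⟨c / 4, by omega⟩
      obtain ⟨a, b⟩ := t
      obtain ⟨e, f⟩ := e
      simp only at hr hi
      rw [hk, hq] at hr
      rw [hq] at hi
      have hi' : n.im = a * b + (4 * q + 3) * (e * f) + 2 * d * (e * e + 2 * f * f) := by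
        linarith
      rw [hi']
      rcases Int.even_or_odd' a with ⟨a, rfl | rfl⟩ <;>
      rcases Int.even_or_odd' b with ⟨b, rfl | rfl⟩ <;>
      rcases Int.even_or_odd' e with ⟨e, rfl | rfl⟩ <;>
      rcases Int.even_or_odd' f with ⟨f, rfl | rfl⟩ <;>
      ring_nf at hr ⊢ <;> omega
    have := (Zsqrtd.intCast_dvd 2 n).2 goal
    simpa using this
  · refine D.not_dvd_of_radical hπ hJ hs hl h1 ?_ hls
    intro t e n ht he hn h4
    have hco : IsCoprime (l ^ 2) ((⟨0, 1⟩ : ℤ√2) ^ 4) := by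
      apply IsCoprime.pow
      rw [hl.irreducible.coprime_iff_not_dvd]
      exact fun h => h3 (hl.associated_of_dvd prime_sqrt_two h)
    have h5 : l ^ 2 ∣ (⟨0, 1⟩ : ℤ√2) ^ 4 * n := by
      have : (⟨0, 1⟩ : ℤ√2) ^ 4 * n = t ^ 2 + ⟨c, 4 * d⟩ * e ^ 2 := by
        rw [← h4]; rfl
      rw [this]
      exact dvd_add (pow_dvd_pow_of_dvd ht 2) ((pow_dvd_pow_of_dvd he 2).mul_left _)
    exact hco.dvd_of_dvd_mul_left h5

/-- A class of order dividing two is trivial or the class of the square root of `(√2)`; the latter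
can only occur if `c ≢ 3 (mod 4)`. -/
lemma two_torsion (hπ : Prime (⟨c, 4 * d⟩ : ℤ√2)) (hpos : TotPos (⟨c, 4 * d⟩ : ℤ√2))
    (g : ClassGroup O) (hg : g ^ 2 = 1) :
    g = 1 ∨ (c % 4 ≠ 3 ∧ ∃ (J : Ideal O) (hJ : J ≠ ⊥), J ^ 2 = Ideal.span {D.ι ⟨0, 1⟩} ∧
      g = cls J hJ) := by
  obtain ⟨I, hI, rfl⟩ := cls_surjective g
  obtain ⟨J, hJ, s, hs, hJs, hIJ⟩ := D.exists_squarefree hπ hpos hI hg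
  have hIJ' : cls I hI = cls J hJ := by
    have : cls I hI * cls I hI = cls I hI * cls J hJ := by rw [hIJ, ← sq, hg]
    exact mul_left_cancel this
  -- split off the principal ideal `(Z)`, whose square is `(π)`
  obtain ⟨J₁, hJ₁, s₁, hs₁, hπs₁, hJ₁s, hcls, hdvd⟩ : ∃ (J₁ : Ideal O) (hJ₁ : J₁ ≠ ⊥) (s₁ : ℤ√2),
      Squarefree s₁ ∧ ¬ (⟨c, 4 * d⟩ : ℤ√2) ∣ s₁ ∧ J₁ ^ 2 = Ideal.span {D.ι s₁} ∧
      cls J hJ = cls J₁ hJ₁ ∧ s₁ ∣ s := by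
    by_cases h : (⟨c, 4 * d⟩ : ℤ√2) ∣ s
    · obtain ⟨s₁, rfl⟩ := h
      have hZ : Ideal.span {D.Z} ^ 2 = Ideal.span {D.ι ⟨c, 4 * d⟩} := by
        rw [Ideal.span_singleton_pow, D.Z_sq, Ideal.span_singleton_neg]
      have hZ0 : Ideal.span {D.Z} ≠ ⊥ := by simpa using D.Z_ne_zero hπ
      have hJZ : J ^ 2 = Ideal.span {D.Z} ^ 2 * Ideal.span {D.ι s₁} := by
        rw [hJs, hZ, Ideal.span_singleton_mul_span_singleton, map_mul]
      obtain ⟨J₁, rfl⟩ : Ideal.span {D.Z} ∣ J :=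
        (UniqueFactorizationMonoid.pow_dvd_pow_iff_dvd two_ne_zero).1 ⟨_, hJZ⟩
      have hJ₁ : J₁ ≠ ⊥ := right_ne_zero_of_mul hJ
      refine ⟨J₁, hJ₁, s₁, hs.of_mul_right, ?_, ?_, ?_, dvd_mul_left _ _⟩
      · intro h
        exact hπ.not_isUnit (hs _ (mul_dvd_mul_left _ h))
      · rw [mul_pow] at hJZ
        exact mul_left_cancel₀ (pow_ne_zero 2 hZ0) hJZ
      · rw [cls_mul hZ0 hJ₁, cls_span, one_mul]
    · exact ⟨J, hJ, s, hs, h, hJs, rfl, dvd_rfl⟩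
  rw [hIJ', hcls]
  have hprime : ∀ l, Prime l → l ∣ s₁ → Associated l ⟨0, 1⟩ ∧ c % 4 ≠ 3 := by
    intro l hl hls
    rcases D.associated_of_dvd hπ hJ₁s hs₁ hl hls with h | h
    · exact absurd (h.symm.dvd.trans hls) hπs₁
    · exact h
  by_cases h : IsUnit s₁
  · left
    rw [cls_eq_one_iff]
    refine ⟨1, ideal_eq_of_sq_eq ?_⟩
    rw [hJ₁s, Ideal.span_singleton_eq_top.2 (h.map D.ι), Ideal.span_singleton_one, Ideal.top_pow]
  · obtain ⟨l, hl, hls⟩ := WfDvdMonoid.exists_irreducible_factor h hs₁.ne_zero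
    obtain ⟨h1, hc⟩ := hprime l hl.prime hls
    refine Or.inr ⟨hc, J₁, hJ₁, ?_, rfl⟩
    obtain ⟨s₂, rfl⟩ : (⟨0, 1⟩ : ℤ√2) ∣ s₁ := h1.symm.dvd.trans hls
    have hu : IsUnit s₂ := by
      by_contra hu
      obtain ⟨l', hl', hls'⟩ := WfDvdMonoid.exists_irreducible_factor hu
        hs₁.of_mul_right.ne_zero
      have h2 := (hprime l' hl'.prime (hls'.mul_left _)).1
      exact prime_sqrt_two.not_isUnit (hs₁ _ (mul_dvd_mul_left _ (h2.symm.dvd.trans hls')))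
    rw [hJ₁s, map_mul, Ideal.span_singleton_mul_right_unit (hu.map D.ι)]

/-- For `c ≡ 1 (mod 4)` the element `ω = (1 + Z)/√2` is integral and `(√2, 1 + ω)² = (√2)`. -/
lemma exists_sq_eq_sqrt_two (hc : c % 4 = 1) :
    ∃ J : Ideal O, J ^ 2 = Ideal.span {D.ι ⟨0, 1⟩} := by
  obtain ⟨q, hq⟩ : ∃ q, c = 4 * q + 1 := ⟨c / 4, by omega⟩
  obtain ⟨k, hk⟩ : ∃ k : ℤ√2, k = ⟨q, d⟩ := ⟨_, rfl⟩
  obtain ⟨r, hr⟩ : ∃ r, r = D.ι ⟨0, 1⟩ := ⟨_, rfl⟩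
  have hπk : (⟨c, 4 * d⟩ : ℤ√2) = 1 + 4 * k := by
    ext
    · simp [hk, hq]; ring
    · simp [hk]
  have hZ := D.Z_sq
  rw [hπk, map_add, map_one, map_mul, map_ofNat] at hZ
  have hr2 : r ^ 2 = 2 := by rw [hr, ← map_pow, sqrt_two_sq, map_ofNat]
  have hr0 : r ≠ 0 := by rw [hr]; exact D.ι_ne_zero prime_sqrt_two.ne_zero
  obtain ⟨ω, hω⟩ : r ∣ 1 + D.Z :=
    dvd_of_quadratic hr0 (a := r) (b := 1 + 2 * D.ι k) (by
      linear_combination hZ + (2 * D.ι k - D.Z) * hr2)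
  have hω2 : ω ^ 2 = r * ω - 1 - 2 * D.ι k := by
    apply mul_left_cancel₀ (pow_ne_zero 2 hr0)
    linear_combination hZ - (1 + D.Z + r * ω) * hω - (D.Z - 2 * D.ι k) * hr2 + r ^ 2 * hω
  refine ⟨Ideal.span {r, 1 + ω}, ?_⟩
  rw [sq, Ideal.span_pair_mul_span_pair, ← hr]
  apply le_antisymm
  · rw [Ideal.span_le]
    rintro w hw
    simp only [Set.mem_insert_iff, Set.mem_singleton_iff] at hw
    rw [SetLike.mem_coe, Ideal.mem_span_singleton]
    rcases hw with rfl | rfl | rfl | rfl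
    · exact dvd_mul_right _ _
    · exact dvd_mul_right _ _
    · exact dvd_mul_left _ _
    · exact ⟨r * ω + ω - r * D.ι k, by linear_combination hω2 + (D.ι k - ω) * hr2⟩
  · rw [Ideal.span_singleton_le_iff_mem]
    set A := Ideal.span {r * r, r * (1 + ω), (1 + ω) * r, (1 + ω) * (1 + ω)} with hA
    have m1 : r * r ∈ A := Ideal.subset_span (by simp)
    have m2 : r * (1 + ω) ∈ A := Ideal.subset_span (by simp)
    have m3 : (1 + ω) * (1 + ω) ∈ A := Ideal.subset_span (by simp)
    -- `r = r(1 + ω) - rω` and `rω = (1 + ω)² - 2(ω - k)`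
    have e : r = r * (1 + ω) - ((1 + ω) * (1 + ω) - (ω - D.ι k) * (r * r)) := by
      linear_combination hω2 + (D.ι k - ω) * hr2
    rw [e]
    exact A.sub_mem m2 (A.sub_mem m3 (A.mul_mem_left _ m1))

end CMData

/-! ### The ideal above `√2` is not principal -/

namespace CMData
variable {O : Type*} [CommRing O] [IsDedekindDomain O] {c d : ℤ} (D : CMData O c d)

set_option linter.unusedSectionVars false

/-- A unit of relative norm `1` is `±1`: in coordinates `t² + πs² = 4`, and if `s ≠ 0` then
`t = a + b√2` has `a² + 2b² ≤ 4` and the norm of `4 - t²` is `p N(s)²`, too large. -/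
lemma eq_one_or_of_mul_σ_eq_one {p : ℕ} (hp : 17 ≤ p)
    (hN : (⟨c, 4 * d⟩ : ℤ√2).norm = p) (hπ : Prime (⟨c, 4 * d⟩ : ℤ√2))
    (hpos : TotPos (⟨c, 4 * d⟩ : ℤ√2)) {η : O} (hη : η * D.σ η = 1) : η = 1 ∨ η = -1 := by
  obtain ⟨t, s, n, h1, -, h3, h4⟩ := D.exists_coords hπ η
  obtain rfl : n = 1 := D.ι_inj (by rw [← h3, hη, map_one])
  have h20 : (2 : O) ≠ 0 := by
    have := D.ι_ne_zero (a := 2) (by decide)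
    rwa [map_ofNat] at this
  by_cases hs : s = 0
  · subst hs
    have h5 : (t - 2) * (t + 2) = 0 := by linear_combination -h4
    rcases mul_eq_zero.1 h5 with h | h
    · left
      rw [sub_eq_zero.1 h] at h1
      apply mul_left_cancel₀ h20
      rw [h1]; simp [map_ofNat D.ι 2]
    · right
      rw [eq_neg_of_add_eq_zero_left h] at h1
      apply mul_left_cancel₀ h20
      rw [h1]; simp [map_ofNat D.ι 2]
  · exfalso
    have hle : t.re ^ 2 + 2 * t.im ^ 2 ≤ 4 := by
      have e1 := congrArg realPlace h4
      have e2 := congrArg realPlace' h4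
      have p1 := mul_pos hpos.1 (totPos_sq hs).1
      have p2 := mul_pos hpos.2 (totPos_sq hs).2
      rw [← map_mul] at p1 p2
      rw [map_add, map_mul, map_pow, map_one, map_ofNat, realPlace_apply] at e1
      rw [map_add, map_mul, map_pow, map_one, map_ofNat, realPlace'_apply] at e2
      have h2 : Real.sqrt 2 ^ 2 = 2 := by simp
      have : (t.re : ℝ) ^ 2 + 2 * t.im ^ 2 ≤ 4 := by nlinarith
      exact_mod_cast this
    have hn : (4 - t ^ 2).norm = p * s.norm ^ 2 := by
      have : 4 - t ^ 2 = ⟨c, 4 * d⟩ * s ^ 2 := by linear_combination h4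
      rw [this, Zsqrtd.norm_mul, hN, sq s, Zsqrtd.norm_mul, sq]
    have hs1 : 1 ≤ s.norm ^ 2 := by
      have : s.norm ≠ 0 := fun h => hs ((norm_eq_zero_iff_two s).1 h)
      have : 0 < s.norm ^ 2 := by positivity
      omega
    have hbig : 17 ≤ (4 - t ^ 2).norm := by
      rw [hn]
      have : (17 : ℤ) ≤ p := by exact_mod_cast hp
      nlinarith
    have hcomp : (4 - t ^ 2).norm = (4 - t.re ^ 2 - 2 * t.im ^ 2) ^ 2 - 8 * (t.re * t.im) ^ 2 := by
      obtain ⟨a, b⟩ := t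
      have : (4 - (⟨a, b⟩ : ℤ√2) ^ 2) = ⟨4 - a ^ 2 - 2 * b ^ 2, -(2 * a * b)⟩ := by
        rw [sq]
        ext
        · simp; ring
        · simp; ring
      rw [this, Zsqrtd.norm_def]
      ring
    nlinarith [sq_nonneg t.re, sq_nonneg t.im, sq_nonneg (t.re * t.im)]

/-- The ideal above `√2` is not principal: a generator `γ` would satisfy `σγ = ±γ`, hence
`γ ∈ ℤ[√2]` or `γ ∈ Z ℚ(√2)`, and neither is compatible with `γσγ = √2 · unit`. -/
lemma not_principal {p : ℕ} (hp : p.Prime) (hp17 : 17 ≤ p)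
    (hN : (⟨c, 4 * d⟩ : ℤ√2).norm = p) (hπ : Prime (⟨c, 4 * d⟩ : ℤ√2))
    (hpos : TotPos (⟨c, 4 * d⟩ : ℤ√2)) {J : Ideal O} (hJ : J ≠ ⊥)
    (hJs : J ^ 2 = Ideal.span {D.ι ⟨0, 1⟩}) : cls J hJ ≠ 1 := by
  rw [Ne, cls_eq_one_iff]
  rintro ⟨γ, rfl⟩
  have hσJ : Ideal.span {D.σ γ} = Ideal.span {γ} := by
    apply ideal_eq_of_sq_eq
    rw [← D.map_σ_span, ← Ideal.map_pow, hJs, D.map_σ_span, D.σ_ι]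
  have hγ0 : γ ≠ 0 := fun h => hJ (by rw [h, Ideal.span_singleton_eq_bot])
  obtain ⟨t, s, n, h1, h2, h3, h4⟩ := D.exists_coords hπ γ
  have hn : n.norm = 2 ∨ n.norm = -2 := by
    obtain ⟨u, hu⟩ : Associated n ⟨0, 1⟩ := by
      apply D.associated_of_span_eq
      rw [← h3, ← Ideal.span_singleton_mul_span_singleton, hσJ, ← sq, hJs]
    have hu' := congrArg Zsqrtd.norm hu
    have h2 : (⟨0, 1⟩ : ℤ√2).norm = -2 := rfl
    rw [Zsqrtd.norm_mul, h2] at hu'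
    rcases (isUnit_iff_norm _).1 u.isUnit with h | h
    · rw [h] at hu'; right; linarith
    · rw [h] at hu'; left; linarith
  rw [Ideal.span_singleton_eq_span_singleton] at hσJ
  obtain ⟨η, hη⟩ := hσJ.symm
  have hηη : (η : O) * D.σ η = 1 := by
    have h := congrArg D.σ hη
    rw [D.σ_σ, map_mul, ← hη] at h
    apply mul_left_cancel₀ hγ0
    linear_combination h
  rcases D.eq_one_or_of_mul_σ_eq_one hp17 hN hπ hpos hηη with h | h
  · rw [h, mul_one] at hη
    obtain ⟨g, hg⟩ := D.fixed γ hη.symm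
    have : n = g ^ 2 := D.ι_inj (by rw [← h3, ← hη, ← hg, map_pow, sq])
    rw [this, sq, Zsqrtd.norm_mul] at hn
    rcases hn with hn | hn
    · exact two_ne_sq _ hn.symm
    · nlinarith [mul_self_nonneg g.norm]
  · rw [h, mul_neg, mul_one] at hη
    have ht : t = 0 := D.ι_inj (by rw [← h2, ← hη, map_zero]; ring)
    rw [ht] at h4
    have h5 := congrArg Zsqrtd.norm h4
    have h16 : (4 : ℤ√2).norm = 16 := rfl
    rw [zero_pow two_ne_zero, zero_add, Zsqrtd.norm_mul, Zsqrtd.norm_mul, hN, h16] at h5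
    have hdvd : (p : ℤ) ∣ 2 ^ 5 := by
      rcases hn with hn | hn
      · exact ⟨(s ^ 2).norm, by rw [← h5, hn]; norm_num⟩
      · exact ⟨-(s ^ 2).norm, by rw [mul_neg, ← h5, hn]; norm_num⟩
    have h6 : p ∣ 2 ^ 5 := by exact_mod_cast hdvd
    have := Nat.le_of_dvd two_pos (hp.dvd_of_dvd_pow h6)
    omega

end CMData

/-! ### Residue symbols -/

section residues

lemma gcd_natAbs_right (a b : ℤ) : a.gcd b.natAbs = a.gcd b := by
  rw [Int.gcd_eq_natAbs_gcd_natAbs, Int.natAbs_natCast, Int.gcd_eq_natAbs_gcd_natAbs]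

variable {p : ℕ} {c d : ℤ}

lemma odd_of_rep (hp8 : p % 8 = 1) (hcd : (p : ℤ) = c ^ 2 - 32 * d ^ 2) : c % 2 = 1 := by
  rcases Int.even_or_odd c with h | h
  · obtain ⟨k, rfl⟩ := h
    have : (p : ℤ) = 2 * (2 * k ^ 2 - 16 * d ^ 2) := by rw [hcd]; ring
    omega
  · exact Int.odd_iff.1 h

lemma isCoprime_of_rep (hp : p.Prime) (hcd : (p : ℤ) = c ^ 2 - 32 * d ^ 2) : IsCoprime c d := by
  rw [Int.isCoprime_iff_gcd_eq_one]
  by_contra h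
  obtain ⟨q, hq, hqg⟩ := Nat.exists_prime_and_dvd h
  obtain ⟨x, hx⟩ : (q : ℤ) ∣ c := (Int.natCast_dvd_natCast.2 hqg).trans (Int.gcd_dvd_left _ _)
  obtain ⟨y, hy⟩ : (q : ℤ) ∣ d := (Int.natCast_dvd_natCast.2 hqg).trans (Int.gcd_dvd_right _ _)
  have h2 : (q : ℤ) * q ∣ p := ⟨x ^ 2 - 32 * y ^ 2, by rw [hcd, hx, hy]; ring⟩
  have h3 : q * q ∣ p := by exact_mod_cast h2
  have h4 := (Nat.squarefree_iff_prime_squarefree.1 hp.prime.squarefree) q hq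
  exact h4 h3

/-- Reciprocity for `p ≡ 1 (mod 8)` and an odd integer of either sign. -/
lemma jacobiSym_swap (hp8 : p % 8 = 1) {m : ℤ} (hm : m % 2 = 1) :
    jacobiSym m p = jacobiSym p m.natAbs := by
  have hp4 : p % 4 = 1 := by omega
  have hpo : Odd p := Nat.odd_iff.2 (by omega)
  have hmo : Odd m.natAbs := Nat.odd_iff.2 (by omega)
  rw [jacobiSym.quadratic_reciprocity_one_mod_four hp4 hmo]
  rcases Int.natAbs_eq m with h | h
  · conv_lhs => rw [h]
  · conv_lhs => rw [h]
    rw [jacobiSym.neg _ hpo, ZMod.χ₄_nat_one_mod_four hp4, one_mul]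

lemma jacobiSym_two (hp8 : p % 8 = 1) : jacobiSym 2 p = 1 := by
  rw [jacobiSym.at_two (Nat.odd_iff.2 (by omega)), ZMod.χ₈_nat_eq_if_mod_eight, if_neg (by omega),
    if_pos (by omega)]

lemma jacobiSym_eq_one_of_rep (hp : p.Prime) (hp8 : p % 8 = 1) (hd : 0 < d)
    (hcd : (p : ℤ) = c ^ 2 - 32 * d ^ 2) : jacobiSym d p = 1 := by
  obtain ⟨k, m, hm, hdm⟩ := Nat.exists_eq_two_pow_mul_odd (n := d.natAbs) (by omega)
  have hd' : d = 2 ^ k * (m : ℤ) := by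
    have : d = d.natAbs := by omega
    rw [this, hdm]; push_cast; ring
  rw [hd', jacobiSym.mul_left, jacobiSym.pow_left, jacobiSym_two hp8, one_pow, one_mul,
    jacobiSym_swap hp8 (by have := Nat.odd_iff.1 hm; omega), Int.natAbs_natCast]
  have hco : IsCoprime c m := (isCoprime_of_rep hp hcd).of_isCoprime_of_dvd_right
    (hd' ▸ dvd_mul_left _ _)
  have : (p : ℤ) % m = c ^ 2 % m := by
    rw [hcd, hd']
    apply Int.ModEq.symm
    rw [Int.modEq_iff_dvd]
    exact ⟨-32 * (2 ^ k) ^ 2 * m, by ring⟩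
  rw [jacobiSym.mod_left' this, jacobiSym.sq_one' (Int.isCoprime_iff_gcd_eq_one.1 hco)]

/-- `(2/p)₄ = (-2/c)`, from `c² ≡ 32d² (mod p)`. -/
lemma two_pow_quarter (hp : p.Prime) (hp8 : p % 8 = 1) (hc : 0 < c) (hd : 0 < d)
    (hcd : (p : ℤ) = c ^ 2 - 32 * d ^ 2) :
    (2 : ZMod p) ^ ((p - 1) / 4) = if c % 8 = 1 ∨ c % 8 = 3 then 1 else -1 := by
  have := Fact.mk hp
  have hc2 := odd_of_rep hp8 hcd
  have hco := isCoprime_of_rep hp hcd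
  have key : ((jacobiSym c p : ℤ) : ZMod p) = 2 ^ ((p - 1) / 4) := by
    have h2 := legendreSym.eq_pow p 2
    have hd' := legendreSym.eq_pow p d
    have hc' := legendreSym.eq_pow p c
    rw [jacobiSym.legendreSym.to_jacobiSym] at h2 hd' hc'
    rw [jacobiSym_two hp8] at h2
    rw [jacobiSym_eq_one_of_rep hp hp8 hd hcd] at hd'
    have e : p / 2 = 2 * ((p - 1) / 4) := by omega
    have hz : (c : ZMod p) ^ 2 = 32 * (d : ZMod p) ^ 2 := by
      have := congrArg (Int.cast : ℤ → ZMod p) hcd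
      push_cast at this
      rw [ZMod.natCast_self] at this
      linear_combination -this
    push_cast at h2 hd'
    rw [hc', e, pow_mul, hz, mul_pow, ← pow_mul, ← e, ← hd', mul_one]
    have : (32 : ZMod p) = 2 ^ 2 * 2 ^ 2 * 2 := by norm_num
    rw [this, mul_pow, mul_pow, ← pow_mul, ← e, ← h2]
    ring
  rw [← key, jacobiSym_swap hp8 hc2]
  have hmod : (p : ℤ) % c.natAbs = (-2 * (4 * d) ^ 2) % c.natAbs := by
    apply Int.ModEq.symm
    rw [Int.modEq_iff_dvd, Int.natCast_natAbs, abs_dvd]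
    exact ⟨c, by rw [hcd]; ring⟩
  have h4 : IsCoprime (4 : ℤ) c := ⟨-(c ^ 2 - 1) / 4, c, by
    have : (4 : ℤ) ∣ -(c ^ 2 - 1) := by
      obtain ⟨k, hk⟩ : ∃ k, c = 2 * k + 1 := ⟨c / 2, by omega⟩
      exact ⟨-(k ^ 2 + k), by rw [hk]; ring⟩
    rw [Int.ediv_mul_cancel this]; ring⟩
  have hg : (4 * d).gcd c.natAbs = 1 := by
    have := Int.isCoprime_iff_gcd_eq_one.1 (h4.mul_left hco.symm)
    rwa [gcd_natAbs_right]
  rw [jacobiSym.mod_left' hmod, jacobiSym.mul_left, jacobiSym.sq_one' hg, mul_one,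
    jacobiSym.at_neg_two (Nat.odd_iff.2 (by omega)), ZMod.χ₈'_nat_eq_if_mod_eight,
    if_neg (by omega)]
  by_cases h : c % 8 = 1 ∨ c % 8 = 3
  · rw [if_pos h, if_pos (by omega)]; norm_num
  · rw [if_neg h, if_neg (by omega)]; norm_num

lemma mod_sixteen_of_rep (hp8 : p % 8 = 1) (hcd : (p : ℤ) = c ^ 2 - 32 * d ^ 2) :
    ((c % 8 = 1 ∨ c % 8 = 7) ∧ Even ((p - 1) / 8)) ∨
      ((c % 8 = 3 ∨ c % 8 = 5) ∧ Odd ((p - 1) / 8)) := by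
  have hc2 := odd_of_rep hp8 hcd
  obtain ⟨k, hk⟩ : ∃ k, c = 8 * k + c % 8 := ⟨c / 8, by omega⟩
  have h8 : c % 8 = 1 ∨ c % 8 = 3 ∨ c % 8 = 5 ∨ c % 8 = 7 := by omega
  have hmod : (p : ℤ) % 16 = (c % 8) ^ 2 % 16 := by
    have : (p : ℤ) = (c % 8) ^ 2 + 16 * (4 * k ^ 2 + k * (c % 8) - 2 * d ^ 2) := by
      rw [hcd]; conv_lhs => rw [hk]
      ring
    omega
  rw [Nat.even_iff, Nat.odd_iff]
  rcases h8 with h | h | h | h <;> rw [h] at hmod ⊢ <;> norm_num at hmod ⊢ <;> omega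

lemma mod_four_of_symbols_ne (hp : p.Prime) (hp8 : p % 8 = 1) (hc : 0 < c) (hd : 0 < d)
    (hcd : (p : ℤ) = c ^ 2 - 32 * d ^ 2)
    (h : (2 : ZMod p) ^ ((p - 1) / 4) = -(-1 : ZMod p) ^ ((p - 1) / 8)) : c % 4 = 3 := by
  rw [two_pow_quarter hp hp8 hc hd hcd] at h
  have : Fact (2 < p) := ⟨by have := hp.two_le; omega⟩
  have hne := ZMod.neg_one_ne_one (n := p)
  rcases mod_sixteen_of_rep hp8 hcd with ⟨h1, h2⟩ | ⟨h1, h2⟩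
  · rw [h2.neg_one_pow] at h
    split_ifs at h with h3
    · exact absurd h.symm hne
    · omega
  · rw [h2.neg_one_pow, neg_neg] at h
    split_ifs at h with h3
    · omega
    · exact absurd h hne

lemma mod_eight_of_symbols_neg (hp : p.Prime) (hp8 : p % 8 = 1) (hc : 0 < c) (hd : 0 < d)
    (hcd : (p : ℤ) = c ^ 2 - 32 * d ^ 2)
    (h : (2 : ZMod p) ^ ((p - 1) / 4) = -1) (h' : (-1 : ℤ) ^ ((p - 1) / 8) = -1) : c % 8 = 5 := by
  rw [two_pow_quarter hp hp8 hc hd hcd] at h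
  have : Fact (2 < p) := ⟨by have := hp.two_le; omega⟩
  have hne := ZMod.neg_one_ne_one (n := p)
  rcases mod_sixteen_of_rep hp8 hcd with ⟨h1, h2⟩ | ⟨h1, h2⟩
  · rw [h2.neg_one_pow] at h'
    norm_num at h'
  · split_ifs at h with h3
    · exact absurd h.symm hne
    · omega

lemma mod_eight_of_symbols_one (hp : p.Prime) (hp8 : p % 8 = 1) (hc : 0 < c) (hd : 0 < d)
    (hcd : (p : ℤ) = c ^ 2 - 32 * d ^ 2)
    (h : (2 : ZMod p) ^ ((p - 1) / 4) = 1) (h' : (-1 : ℤ) ^ ((p - 1) / 8) = 1) : c % 8 = 1 := by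
  rw [two_pow_quarter hp hp8 hc hd hcd] at h
  have : Fact (2 < p) := ⟨by have := hp.two_le; omega⟩
  have hne := ZMod.neg_one_ne_one (n := p)
  rcases mod_sixteen_of_rep hp8 hcd with ⟨h1, h2⟩ | ⟨h1, h2⟩
  · split_ifs at h with h3
    · omega
    · exact absurd h hne
  · rw [h2.neg_one_pow] at h'
    norm_num at h'

/-- Reduction modulo `π = c + 4d√2`, a ring homomorphism `ℤ[√2] → 𝔽_p`. -/
lemma exists_residue_hom (hp : p.Prime) (hp8 : p % 8 = 1)
    (hcd : (p : ℤ) = c ^ 2 - 32 * d ^ 2) :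
    ∃ φ : ℤ√2 →+* ZMod p, ∀ a, φ a = 0 ↔ (⟨c, 4 * d⟩ : ℤ√2) ∣ a := by
  have := Fact.mk hp
  have hN : (⟨c, 4 * d⟩ : ℤ√2).norm = p := by rw [Zsqrtd.norm_def, hcd]; ring
  have hπ : Prime (⟨c, 4 * d⟩ : ℤ√2) := prime_of_norm_natAbs_prime (by
    rw [hN, Int.natAbs_natCast]; exact hp)
  have hz : (c : ZMod p) ^ 2 = 32 * (d : ZMod p) ^ 2 := by
    have := congrArg (Int.cast : ℤ → ZMod p) hcd
    push_cast at this
    rw [ZMod.natCast_self] at this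
    linear_combination -this
  have hpd : ¬ (p : ℤ) ∣ 4 * d := by
    intro h
    have hpp : _root_.Prime (p : ℤ) := Nat.prime_iff_prime_int.1 hp
    rcases hpp.dvd_mul.1 h with h | h
    · have : p ∣ 4 := by exact_mod_cast h
      have h5 : p ∣ 2 ^ 2 := this
      have := Nat.le_of_dvd two_pos (hp.dvd_of_dvd_pow h5)
      have := hp.two_le
      omega
    · obtain ⟨y, hy⟩ := h
      obtain ⟨x, hx⟩ : (p : ℤ) ∣ c := hpp.dvd_of_dvd_pow (n := 2)
        ⟨1 + 32 * p * y ^ 2, by linear_combination -hcd + 32 * (d + p * y) * hy⟩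
      have h1 := (isCoprime_of_rep hp hcd).isUnit_of_dvd' ⟨x, hx⟩ ⟨y, hy⟩
      exact hpp.not_isUnit h1
  have hd4 : ((4 * d : ℤ) : ZMod p) ≠ 0 := by
    rwa [Ne, ZMod.intCast_zmod_eq_zero_iff_dvd]
  push_cast at hd4
  have hd0 : (d : ZMod p) ≠ 0 := fun h => hd4 (by rw [h, mul_zero])
  have h40 : (4 : ZMod p) ≠ 0 := fun h => hd4 (by rw [h, zero_mul])
  refine ⟨Zsqrtd.lift ⟨-c / (4 * d), ?_⟩, fun a => ⟨fun h => ?_, ?_⟩⟩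
  · push_cast
    field_simp
    rw [hz]; ring
  · rw [Zsqrtd.lift_apply_apply] at h
    have h1 : ((4 * d * a.re - c * a.im : ℤ) : ZMod p) = 0 := by
      push_cast
      have : (a.re : ZMod p) = a.im * c / (4 * d) := by linear_combination h
      rw [this]
      field_simp
      ring
    rw [ZMod.intCast_zmod_eq_zero_iff_dvd] at h1
    obtain ⟨k, hk⟩ := h1
    have h2 : (⟨c, 4 * d⟩ : ℤ√2) ∣ ((4 * d : ℤ) : ℤ√2) * a := by
      refine ⟨⟨a.im + k * c, - 4 * d * k⟩, ?_⟩
      ext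
      · simp
        linear_combination hk + k * hcd
      · simp
        ring
    rcases hπ.dvd_mul.1 h2 with h | h
    · exfalso
      obtain ⟨x, hx⟩ := h
      have h3 := congrArg Zsqrtd.norm hx
      rw [Zsqrtd.norm_mul, hN, Zsqrtd.norm_intCast] at h3
      have hpp : _root_.Prime (p : ℤ) := Nat.prime_iff_prime_int.1 hp
      rcases hpp.dvd_mul.1 ⟨_, h3⟩ with h | h <;> exact hpd h
    · exact h
  · rintro ⟨b, rfl⟩
    rw [map_mul, Zsqrtd.lift_apply_apply]
    push_cast
    have : (c : ZMod p) + 4 * d * (-c / (4 * d)) = 0 := by field_simp; ring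
    rw [this, zero_mul]

/-- The value of the quadratic symbol of `2 + √2` modulo `π` is `(2/c)`. -/
lemma isSquare_two_add_sqrt (hp : p.Prime) (hp8 : p % 8 = 1) (hd : 0 < d)
    (hcd : (p : ℤ) = c ^ 2 - 32 * d ^ 2) {φ : ℤ√2 →+* ZMod p}
    (hφ : ∀ a, φ a = 0 ↔ (⟨c, 4 * d⟩ : ℤ√2) ∣ a) :
    IsSquare (φ ⟨2, 1⟩) ↔ c % 8 = 1 ∨ c % 8 = 7 := by
  have := Fact.mk hp
  have hc2 := odd_of_rep hp8 hcd
  have hco := isCoprime_of_rep hp hcd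
  have hJ : jacobiSym (d * (8 * d - c)) p = if c % 8 = 1 ∨ c % 8 = 7 then 1 else -1 := by
    rw [jacobiSym.mul_left, jacobiSym_eq_one_of_rep hp hp8 hd hcd, one_mul,
      jacobiSym_swap hp8 (by omega)]
    set m := 8 * d - c with hm
    have hmod : (p : ℤ) % m.natAbs = (2 * (2 ^ 2 * d ^ 2)* 2 ^ 2) % m.natAbs := by
      apply Int.ModEq.symm
      rw [Int.modEq_iff_dvd, Int.natCast_natAbs, abs_dvd]
      exact ⟨-c - 8 * d, by rw [hcd, hm]; ring⟩
    have hg : d.gcd m.natAbs = 1 := by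
      rw [gcd_natAbs_right, ← Int.isCoprime_iff_gcd_eq_one, hm]
      have h := (IsCoprime.neg_right hco.symm).add_mul_left_right 8
      rwa [mul_comm d 8, neg_add_eq_sub] at h
    have hmo : Odd m.natAbs := Nat.odd_iff.2 (by omega)
    have h4 : jacobiSym 2 m.natAbs ^ 2 = 1 := by
      rw [jacobiSym.at_two hmo, ZMod.χ₈_nat_eq_if_mod_eight]
      rw [if_neg (by omega)]
      split_ifs <;> norm_num
    rw [jacobiSym.mod_left' hmod, jacobiSym.mul_left, jacobiSym.mul_left, jacobiSym.mul_left,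
      jacobiSym.sq_one' hg, jacobiSym.pow_left, h4, mul_one, mul_one, mul_one,
      jacobiSym.at_two hmo, ZMod.χ₈_nat_eq_if_mod_eight, if_neg (by omega)]
    by_cases h : c % 8 = 1 ∨ c % 8 = 7
    · rw [if_pos h, if_pos (by omega)]
    · rw [if_neg h, if_neg (by omega)]
  have hne : (4 * d : ZMod p) ≠ 0 := by
    have h1 : jacobiSym d p ≠ 0 := by
      rw [jacobiSym_eq_one_of_rep hp hp8 hd hcd]; norm_num
    have h2 : jacobiSym 2 p ≠ 0 := by
      rw [jacobiSym_two hp8]; norm_num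
    rw [← jacobiSym.legendreSym.to_jacobiSym, Ne, legendreSym.eq_zero_iff] at h1 h2
    push_cast at h2
    have : (4 : ZMod p) = 2 * 2 := by norm_num
    rw [this]
    exact mul_ne_zero (mul_ne_zero h2 h2) h1
  have hφπ := (hφ ⟨c, 4 * d⟩).2 dvd_rfl
  have hrel : φ ⟨2, 1⟩ * (4 * d) ^ 2 = ((d * (8 * d - c) : ℤ) : ZMod p) * 2 ^ 2 := by
    have e1 : (⟨c, 4 * d⟩ : ℤ√2) = (c : ℤ√2) + 4 * (d : ℤ√2) * ⟨0, 1⟩ := by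
      ext <;> simp
    have e2 : (⟨2, 1⟩ : ℤ√2) = 2 + ⟨0, 1⟩ := rfl
    rw [e1, map_add, map_mul, map_mul, map_intCast, map_intCast, map_ofNat] at hφπ
    rw [e2, map_add, map_ofNat]
    push_cast
    linear_combination 4 * (d : ZMod p) * hφπ
  have h20 : (2 : ZMod p) ≠ 0 := by
    intro h
    apply hne
    have : (4 : ZMod p) = 2 * 2 := by norm_num
    rw [this, h]; ring
  have hiff : IsSquare (φ ⟨2, 1⟩) ↔ IsSquare ((d * (8 * d - c) : ℤ) : ZMod p) := by
    constructor
    · rintro ⟨r, hr⟩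
      refine ⟨r * (4 * d) / 2, ?_⟩
      field_simp
      rw [← hrel, hr]; ring
    · rintro ⟨r, hr⟩
      refine ⟨r * 2 / (4 * d), ?_⟩
      rw [hr] at hrel
      have hrel' := eq_div_of_mul_eq (pow_ne_zero 2 hne) hrel
      rw [hrel', div_mul_div_comm]; ring_nf
  rw [hiff]
  constructor
  · intro h
    by_contra h1
    rw [if_neg h1, ZMod.nonsquare_iff_jacobiSym_eq_neg_one] at hJ
    exact hJ h
  · intro h
    rw [if_pos h] at hJ
    exact ZMod.isSquare_of_jacobiSym_eq_one hJ

end residues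

/-! ### The class of the ideal above `√2` when `2 + √2` is not a square modulo `π` -/

/-- If `2 + √2` is not a square modulo `π`, then `(2 + √2)e² = a² + πb²` forces `e = 0`. -/
lemma eq_zero_of_form {F : Type*} [Field F] {π : ℤ√2} (hπ : Prime π) {φ : ℤ√2 →+* F}
    (hφ : ∀ a, φ a = 0 ↔ π ∣ a) (hsq : ¬ IsSquare (φ ⟨2, 1⟩)) {e a b : ℤ√2}
    (h : ⟨2, 1⟩ * e ^ 2 = a ^ 2 + π * b ^ 2) : e = 0 := by
  induction hN : e.norm.natAbs using Nat.strong_induction_on generalizing e a b with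
  | _ N ih =>
    by_cases he : φ e = 0
    · obtain ⟨e', rfl⟩ := (hφ e).1 he
      obtain ⟨a', rfl⟩ : π ∣ a := hπ.dvd_of_dvd_pow (n := 2)
        ⟨⟨2, 1⟩ * π * e' ^ 2 - b ^ 2, by linear_combination -h⟩
      obtain ⟨b', rfl⟩ : π ∣ b := hπ.dvd_of_dvd_pow (n := 2)
        ⟨⟨2, 1⟩ * e' ^ 2 - a' ^ 2, mul_left_cancel₀ hπ.ne_zero (by linear_combination -h)⟩
      have h' : ⟨2, 1⟩ * e' ^ 2 = a' ^ 2 + π * b' ^ 2 :=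
        mul_left_cancel₀ (pow_ne_zero 2 hπ.ne_zero) (by linear_combination h)
      by_contra hne
      have he' : e' ≠ 0 := right_ne_zero_of_mul hne
      refine he' (ih _ ?_ h' rfl)
      rw [← hN, Zsqrtd.norm_mul, Int.natAbs_mul]
      have h1 : π.norm.natAbs ≠ 1 := fun h => hπ.not_isUnit (Zsqrtd.norm_eq_one_iff.1 h)
      have h2 : π.norm.natAbs ≠ 0 := fun h =>
        hπ.ne_zero ((norm_eq_zero_iff_two π).1 (Int.natAbs_eq_zero.1 h))
      have h3 : 0 < e'.norm.natAbs := Nat.pos_of_ne_zero fun h =>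
        he' ((norm_eq_zero_iff_two e').1 (Int.natAbs_eq_zero.1 h))
      have h4 : 2 ≤ π.norm.natAbs := by omega
      nlinarith
    · exfalso
      apply hsq
      have h1 := congrArg φ h
      rw [map_add, map_mul, map_mul, map_pow, map_pow, (hφ π).2 dvd_rfl, zero_mul, add_zero] at h1
      refine ⟨φ a / φ e, ?_⟩
      rw [div_mul_div_comm, eq_div_iff (mul_ne_zero he he)]
      linear_combination h1

namespace CMData
variable {O : Type*} [CommRing O] [IsDedekindDomain O] {c d : ℤ} (D : CMData O c d)

set_option linter.unusedSectionVars false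

lemma map_σ_of_sq_eq {J : Ideal O} (hJs : J ^ 2 = Ideal.span {D.ι ⟨0, 1⟩}) :
    J.map (D.σ : O →+* O) = J := by
  apply ideal_eq_of_sq_eq
  rw [← Ideal.map_pow, hJs, D.map_σ_span, D.σ_ι]

/-- If `2 + √2` is not a square modulo `π`, the class of the ideal above `√2` is not a square:
otherwise taking relative norms would make `2 + √2` a relative norm from the field. -/
lemma not_sq {F : Type*} [Field F] (hπ : Prime (⟨c, 4 * d⟩ : ℤ√2))
    (hpos : TotPos (⟨c, 4 * d⟩ : ℤ√2)) {φ : ℤ√2 →+* F}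
    (hφ : ∀ a, φ a = 0 ↔ (⟨c, 4 * d⟩ : ℤ√2) ∣ a) (hsq : ¬ IsSquare (φ ⟨2, 1⟩))
    {J : Ideal O} (hJ : J ≠ ⊥) (hJs : J ^ 2 = Ideal.span {D.ι ⟨0, 1⟩}) (g : ClassGroup O) :
    g ^ 2 ≠ cls J hJ := by
  intro hg
  obtain ⟨A, hA, rfl⟩ := cls_surjective g
  have hAA : A * A ≠ ⊥ := mul_ne_zero hA hA
  rw [sq, ← cls_mul hA hA hAA, eq_comm, cls_eq_cls_iff] at hg
  obtain ⟨x, y, hx, hy, hxy⟩ := hg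
  obtain ⟨n, hn0, hn⟩ := D.mul_map_σ A hA
  obtain ⟨X, hX⟩ := D.exists_norm x
  obtain ⟨Y, hY⟩ := D.exists_norm y
  have hXp := D.norm_totPos hπ hpos hx hX.symm
  have hYp := D.norm_totPos hπ hpos hy hY.symm
  have hass : Associated (X * ⟨0, 1⟩) (Y * n ^ 2) := by
    apply D.associated_of_span_eq
    have h1 := congrArg (fun I : Ideal O => I * I.map (D.σ : O →+* O)) hxy
    simp only [Ideal.map_mul, D.map_σ_of_sq_eq hJs, D.map_σ_span] at h1
    rw [map_mul, map_mul, map_pow, ← Ideal.span_singleton_mul_span_singleton,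
      ← Ideal.span_singleton_mul_span_singleton, ← Ideal.span_singleton_pow, ← hJs, ← hn, hX, hY,
      ← Ideal.span_singleton_mul_span_singleton, ← Ideal.span_singleton_mul_span_singleton]
    calc _ = Ideal.span {x} * J * (Ideal.span {D.σ x} * J) := by ring
      _ = _ := h1
      _ = _ := by ring
  obtain ⟨u, hu⟩ := hass
  have hup : TotPos (⟨0, 1⟩ * (u : ℤ√2)) := by
    apply TotPos.of_mul (b := X) _ hXp
    have : (⟨0, 1⟩ * (u : ℤ√2)) * X = Y * n ^ 2 := by linear_combination hu
    rw [this]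
    exact hYp.mul (totPos_sq hn0)
  obtain ⟨w, hw, hw'⟩ := exists_sq_of_totPos_sqrt_mul u.isUnit hup
  obtain ⟨t, s, M, -, -, h3, h4⟩ := D.exists_coords hπ (x * y)
  have hM : M = X * Y := D.ι_inj (by rw [← h3, map_mul, map_mul, hX, hY]; ring)
  have h5 := eq_zero_of_form hπ hφ hsq (e := 2 * X * w) (a := n * t) (b := n * s) (by
    rw [hM] at h4
    linear_combination n ^ 2 * h4 + 4 * X * hu - 4 * X ^ 2 * hw')
  have hX0 : X ≠ 0 := by
    rintro rfl
    have := hXp.1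
    simp at this
  exact mul_ne_zero (mul_ne_zero (by decide) hX0) hw.ne_zero h5

end CMData

/-! ### Small values of the form `v² - (2 + √2)u²` divisible by `π` -/

/-- A basis of the lattice of pairs `(v, u) ∈ ℤ[√2]²` with `v ≡ ru (mod π)`, where `√2 ≡ s (mod π)`,
embedded in `ℝ⁴` by `(v, u) ↦ (v, v', ℓu, ℓ'u')` with `ℓ² = 2 + √2` and `ℓ'² = 2 - √2`. -/
def latticeMatrix (p : ℕ) (s r : ℤ) (ℓ ℓ' : ℝ) : Matrix (Fin 4) (Fin 4) ℝ :=
  !![(p : ℝ), (p : ℝ), 0, 0;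
     Real.sqrt 2 - s, -Real.sqrt 2 - s, 0, 0;
     r, r, ℓ, ℓ';
     r * s, r * s, Real.sqrt 2 * ℓ, -Real.sqrt 2 * ℓ']

lemma det_latticeMatrix (p : ℕ) (s r : ℤ) (ℓ ℓ' : ℝ) :
    (latticeMatrix p s r ℓ ℓ').det = 8 * p * (ℓ * ℓ') := by
  have h2 : Real.sqrt 2 ^ 2 = 2 := by simp
  simp [latticeMatrix, Matrix.det_succ_row_zero, Fin.sum_univ_succ, Fin.succAbove]
  linear_combination (4 * p * ℓ * ℓ' : ℝ) * h2

/-- Minkowski's theorem for the lattice of `latticeMatrix` and a cube of volume `16 · 12p`. -/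
lemma exists_small_vector {p : ℕ} (hp : 0 < p) (s r : ℤ) {ℓ ℓ' : ℝ} (hℓ : ℓ * ℓ' = Real.sqrt 2)
    {R : ℝ} (hR0 : 0 ≤ R) (hR : R ^ 4 = 12 * p) :
    ∃ n : Fin 4 → ℤ, n ≠ 0 ∧ ∀ j, |∑ i, (n i : ℝ) * latticeMatrix p s r ℓ ℓ' i j| < R := by
  set A := latticeMatrix p s r ℓ ℓ' with hA
  have hdet : A.det = 8 * p * Real.sqrt 2 := by rw [hA, det_latticeMatrix, hℓ]
  have hpR : (0 : ℝ) < p := by exact_mod_cast hp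
  have hdet0 : 0 < A.det := by rw [hdet]; positivity
  have hli : LinearIndependent ℝ A.row := Matrix.linearIndependent_rows_of_det_ne_zero hdet0.ne'
  let b : Module.Basis (Fin 4) ℝ (Fin 4 → ℝ) :=
    basisOfLinearIndependentOfCardEqFinrank hli (by simp)
  have hb : ⇑b = A.row := coe_basisOfLinearIndependentOfCardEqFinrank _ _
  have hfund := ZSpan.isAddFundamentalDomain' b MeasureTheory.volume
  have hvol : MeasureTheory.volume (ZSpan.fundamentalDomain b) = ENNReal.ofReal A.det := by
    rw [ZSpan.volume_fundamentalDomain, hb, ← abs_of_pos hdet0]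
    rfl
  have : Countable (Submodule.span ℤ (Set.range b)).toAddSubgroup :=
    inferInstanceAs (Countable (Submodule.span ℤ (Set.range b)))
  obtain ⟨x, hx0, hx⟩ := MeasureTheory.exists_ne_zero_mem_lattice_of_measure_mul_two_pow_lt_measure
    (L := (Submodule.span ℤ (Set.range b)).toAddSubgroup)
    (s := Set.pi Set.univ fun _ : Fin 4 => Set.Ioo (-R) R) hfund
    (fun x hx i hi => by
      have := hx i hi
      simp only [Set.mem_Ioo, Pi.neg_apply] at this ⊢
      constructor <;> linarith)
    (convex_pi fun _ _ => convex_Ioo _ _)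
    (by
      rw [hvol, hdet, Real.volume_pi_Ioo]
      simp only [Module.finrank_fintype_fun_eq_card, Fintype.card_fin, Finset.prod_const,
        Finset.card_univ, sub_neg_eq_add]
      rw [← ENNReal.ofReal_pow (by linarith), ← ENNReal.ofReal_ofNat 2,
        ← ENNReal.ofReal_pow (by norm_num), ← ENNReal.ofReal_mul (by positivity)]
      have h2 : Real.sqrt 2 < 1.5 := by
        rw [Real.sqrt_lt' (by norm_num)]; norm_num
      have e : (R + R) ^ 4 = 16 * (12 * p) := by rw [← hR]; ring
      rw [e]
      apply (ENNReal.ofReal_lt_ofReal_iff (by positivity)).2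
      nlinarith)
  obtain ⟨x, hxm⟩ := x
  have hxm' : x ∈ Submodule.span ℤ (Set.range b) := hxm
  obtain ⟨n, hn⟩ := (Submodule.mem_span_range_iff_exists_fun ℤ).1 hxm'
  have hxj : ∀ j, ∑ i, (n i : ℝ) * A i j = x j := by
    intro j
    rw [← hn, hb]
    simp
  refine ⟨n, ?_, fun j => ?_⟩
  · rintro rfl
    apply hx0
    ext j
    change x j = 0
    rw [← hxj j]
    simp
  · rw [hxj, abs_lt]
    exact hx j (Set.mem_univ j)

/-- If `2 + √2` is a square modulo `π`, then `π` divides a nontrivial value of the form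
`v² - (2 + √2)u²` of absolute norm less than `12p`. -/
lemma exists_small_form {p : ℕ} (hp : p.Prime) {π : ℤ√2} {φ : ℤ√2 →+* ZMod p}
    (hφ : ∀ a, φ a = 0 ↔ π ∣ a) (hsq : IsSquare (φ ⟨2, 1⟩)) :
    ∃ v u : ℤ√2, (v ≠ 0 ∨ u ≠ 0) ∧ π ∣ v ^ 2 - ⟨2, 1⟩ * u ^ 2 ∧
      |(v ^ 2 - (⟨2, 1⟩ : ℤ√2) * u ^ 2).norm| < 12 * p := by
  have := Fact.mk hp
  have h2 : Real.sqrt 2 ^ 2 = 2 := by simp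
  have h2lt : Real.sqrt 2 < 2 := by rw [Real.sqrt_lt' (by norm_num)]; norm_num
  obtain ⟨r₀, hr₀⟩ := hsq
  obtain ⟨r, rfl⟩ := ZMod.intCast_surjective r₀
  obtain ⟨s, hs⟩ := ZMod.intCast_surjective (φ ⟨0, 1⟩)
  have hℓ2 : Real.sqrt (2 + Real.sqrt 2) ^ 2 = 2 + Real.sqrt 2 := Real.sq_sqrt (by positivity)
  have hℓ'2 : Real.sqrt (2 - Real.sqrt 2) ^ 2 = 2 - Real.sqrt 2 := Real.sq_sqrt (by linarith)
  have hℓℓ' : Real.sqrt (2 + Real.sqrt 2) * Real.sqrt (2 - Real.sqrt 2) = Real.sqrt 2 := by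
    rw [← Real.sqrt_mul (by positivity)]
    congr 1
    linear_combination -h2
  set ℓ := Real.sqrt (2 + Real.sqrt 2)
  set ℓ' := Real.sqrt (2 - Real.sqrt 2)
  obtain ⟨R, hR0, hR⟩ : ∃ R : ℝ, 0 ≤ R ∧ R ^ 4 = 12 * p := by
    refine ⟨Real.sqrt (Real.sqrt (12 * p)), Real.sqrt_nonneg _, ?_⟩
    rw [show 4 = 2 * 2 from rfl, pow_mul, Real.sq_sqrt (Real.sqrt_nonneg _),
      Real.sq_sqrt (by positivity)]
  obtain ⟨n, hn0, hn⟩ := exists_small_vector hp.pos s r hℓℓ' hR0 hR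
  have hφab : ∀ a b : ℤ, φ ⟨a, b⟩ = a + b * s := by
    intro a b
    have : (⟨a, b⟩ : ℤ√2) = a + b * ⟨0, 1⟩ := by ext <;> simp
    rw [this, map_add, map_mul, map_intCast, map_intCast, hs]
  obtain ⟨v, hv⟩ : ∃ v : ℤ√2, v = ⟨n 0 * p - n 1 * s + n 2 * r + n 3 * (r * s), n 1⟩ := ⟨_, rfl⟩
  obtain ⟨u, hu⟩ : ∃ u : ℤ√2, u = ⟨n 2, n 3⟩ := ⟨_, rfl⟩
  refine ⟨v, u, ?_, ?_, ?_⟩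
  · by_contra! h
    rw [hv, hu] at h
    obtain ⟨h1, h3⟩ := h
    rw [Zsqrtd.ext_iff] at h1 h3
    simp only [Zsqrtd.re_zero, Zsqrtd.im_zero] at h1 h3
    apply hn0
    obtain ⟨h11, h12⟩ := h1
    obtain ⟨h31, h32⟩ := h3
    rw [h12, h31, h32] at h11
    have hp0 : (p : ℤ) ≠ 0 := by exact_mod_cast hp.ne_zero
    have h00 : n 0 = 0 := by
      have : n 0 * (p : ℤ) = 0 := by linarith
      exact (mul_eq_zero.1 this).resolve_right hp0
    ext i
    fin_cases i <;> assumption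
  · rw [← hφ, map_sub, map_mul, map_pow, map_pow, hr₀, hv, hu, hφab, hφab]
    push_cast
    rw [ZMod.natCast_self]
    ring
  · have e0 : |realPlace v| < R := by
      have := hn 0
      rw [realPlace_apply, hv]
      convert this using 2
      simp [latticeMatrix, Fin.sum_univ_four]
      ring
    have e1 : |realPlace' v| < R := by
      have := hn 1
      rw [realPlace'_apply, hv]
      convert this using 2
      simp [latticeMatrix, Fin.sum_univ_four]
      ring
    have e2 : |ℓ * realPlace u| < R := by
      have := hn 2
      rw [realPlace_apply, hu]
      convert this using 2
      simp [latticeMatrix, Fin.sum_univ_four]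
      ring
    have e3 : |ℓ' * realPlace' u| < R := by
      have := hn 3
      rw [realPlace'_apply, hu]
      convert this using 2
      simp [latticeMatrix, Fin.sum_univ_four]
      ring
    have key : ∀ x y : ℝ, |x| < R → |y| < R → |x ^ 2 - y ^ 2| < R ^ 2 := by
      intro x y hx hy
      have hx' := sq_lt_sq' (abs_lt.1 hx).1 (abs_lt.1 hx).2
      have hy' := sq_lt_sq' (abs_lt.1 hy).1 (abs_lt.1 hy).2
      rw [abs_lt]
      constructor <;> nlinarith [sq_nonneg x, sq_nonneg y]
    have hreal : |((v ^ 2 - (⟨2, 1⟩ : ℤ√2) * u ^ 2).norm : ℝ)| < 12 * p := by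
      rw [norm_eq_realPlace_mul, abs_mul, ← hR]
      have f1 := key _ _ e0 e2
      have f2 := key _ _ e1 e3
      have g1 : realPlace (v ^ 2 - ⟨2, 1⟩ * u ^ 2) = realPlace v ^ 2 - (ℓ * realPlace u) ^ 2 := by
        rw [map_sub, map_mul, map_pow, map_pow, realPlace_apply ⟨2, 1⟩, mul_pow, hℓ2]
        simp
      have g2 : realPlace' (v ^ 2 - ⟨2, 1⟩ * u ^ 2) =
          realPlace' v ^ 2 - (ℓ' * realPlace' u) ^ 2 := by
        rw [map_sub, map_mul, map_pow, map_pow, realPlace'_apply ⟨2, 1⟩, mul_pow, hℓ'2]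
        simp
      rw [g1, g2, show R ^ 4 = R ^ 2 * R ^ 2 by ring]
      exact mul_lt_mul'' f1 f2 (abs_nonneg _) (abs_nonneg _)
    exact_mod_cast hreal

/-! ### Norms from `ℚ(√(2 + √2))` -/

/-- `a` is, up to a nonzero square, a value of the form `v² - (2 + √2)u²`; equivalently, a norm from
`ℚ(√(2 + √2))`. -/
def IsForm (a : ℤ√2) : Prop := ∃ e v u : ℤ√2, e ≠ 0 ∧ a * e ^ 2 = v ^ 2 - ⟨2, 1⟩ * u ^ 2

lemma IsForm.mul {a b : ℤ√2} (ha : IsForm a) (hb : IsForm b) : IsForm (a * b) := by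
  obtain ⟨e, v, u, he, h⟩ := ha
  obtain ⟨e', v', u', he', h'⟩ := hb
  refine ⟨e * e', v * v' + ⟨2, 1⟩ * u * u', v * u' + u * v', mul_ne_zero he he', ?_⟩
  linear_combination b * e' ^ 2 * h + (v ^ 2 - ⟨2, 1⟩ * u ^ 2) * h'

lemma IsForm.of_mul_sq {a b : ℤ√2} (hb : b ≠ 0) (h : IsForm (a * b ^ 2)) : IsForm a := by
  obtain ⟨e, v, u, he, h⟩ := h
  exact ⟨b * e, v, u, mul_ne_zero hb he, by linear_combination h⟩

lemma isForm_sq (a : ℤ√2) : IsForm (a ^ 2) := ⟨1, a, 0, one_ne_zero, by ring⟩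

lemma isForm_eps_inv : IsForm ⟨-1, 1⟩ := ⟨1, 1, ⟨-1, 1⟩, one_ne_zero, rfl⟩

lemma isForm_neg_one : IsForm (-1) := by
  have h : IsForm ⟨-1, -1⟩ := ⟨1, 1, 1, one_ne_zero, rfl⟩
  exact h.mul isForm_eps_inv

lemma isForm_eps : IsForm ⟨1, 1⟩ := by
  have h : IsForm ⟨-1, -1⟩ := ⟨1, 1, 1, one_ne_zero, rfl⟩
  exact h.mul isForm_neg_one

lemma isForm_sqrt_two : IsForm ⟨0, 1⟩ := by
  have h : IsForm ⟨-2, -1⟩ := ⟨1, 0, 1, one_ne_zero, rfl⟩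
  exact (h.mul isForm_neg_one).mul isForm_eps_inv

lemma isForm_of_isUnit {u : ℤ√2} (hu : IsUnit u) : IsForm u := by
  have key : ∀ u : ℤ√2, u.norm = 1 → IsForm u := by
    intro u hu
    obtain ⟨w, -, rfl | rfl⟩ := exists_sq_of_norm_one hu
    · exact isForm_sq w
    · rw [neg_eq_neg_one_mul]
      exact isForm_neg_one.mul (isForm_sq w)
  rcases (isUnit_iff_norm u).1 hu with h | h
  · exact key u h
  · have h1 : u = ⟨1, 1⟩ * (⟨-1, 1⟩ * u) := by
      rw [← mul_assoc]
      exact (one_mul u).symm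
    rw [h1]
    refine isForm_eps.mul (key _ ?_)
    rw [Zsqrtd.norm_mul, h]
    rfl

lemma isForm_of_norm_two_pow {k : ℕ} {κ : ℤ√2} (h : κ.norm.natAbs = 2 ^ k) : IsForm κ := by
  induction k generalizing κ with
  | zero => exact isForm_of_isUnit (Zsqrtd.norm_eq_one_iff.1 (by simpa using h))
  | succ k ih =>
    have h2 : (2 : ℤ) ∣ κ.norm := by
      rw [pow_succ] at h
      omega
    obtain ⟨κ', rfl⟩ : (⟨0, 1⟩ : ℤ√2) ∣ κ := by
      rw [sqrt_two_dvd_iff]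
      rw [Zsqrtd.norm_def] at h2
      have : (2 : ℤ) ∣ κ.re * κ.re := by
        have h3 : κ.re * κ.re = (κ.re * κ.re - 2 * κ.im * κ.im) + 2 * (κ.im * κ.im) := by ring
        rw [h3]
        exact dvd_add h2 (dvd_mul_right _ _)
      exact (Int.prime_two.dvd_mul.1 this).elim id id
    refine isForm_sqrt_two.mul (ih ?_)
    have h3 : (⟨0, 1⟩ : ℤ√2).norm = -2 := rfl
    rw [Zsqrtd.norm_mul, h3, Int.natAbs_mul] at h
    have h4 : (-2 : ℤ).natAbs = 2 := rfl
    rw [h4, pow_succ] at h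
    omega

/-- If the norm form has no nontrivial zero modulo `q` (as for the inert primes `3, 5, 11`), then
`q ∣ N(a)` only if `q ∣ a`. -/
lemma sq_dvd_norm_of_inert {q : ℕ} (hq : ∀ x y : ZMod q, x * x - 2 * y * y = 0 → x = 0 ∧ y = 0)
    {a : ℤ√2} (h : (q : ℤ) ∣ a.norm) : ∃ b : ℤ√2, a = (q : ℤ√2) * b := by
  rw [← ZMod.intCast_zmod_eq_zero_iff_dvd, Zsqrtd.norm_def] at h
  push_cast at h
  obtain ⟨h1, h2⟩ := hq _ _ h
  rw [ZMod.intCast_zmod_eq_zero_iff_dvd] at h1 h2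
  obtain ⟨x, hx⟩ := h1
  obtain ⟨y, hy⟩ := h2
  exact ⟨⟨x, y⟩, by ext <;> simp [hx, hy]⟩

lemma norm_natCast_mul (q : ℕ) (b : ℤ√2) : ((q : ℤ√2) * b).norm = (q : ℤ) ^ 2 * b.norm := by
  rw [Zsqrtd.norm_mul, Zsqrtd.norm_natCast, sq]

/-- `2 + √2` is not a square modulo `3`, so `3 ∣ v² - (2 + √2)u²` only if `3 ∣ v, u`. -/
lemma norm_form_three {v u : ℤ√2} (h : (3 : ℤ) ∣ (v ^ 2 - (⟨2, 1⟩ : ℤ√2) * u ^ 2).norm) :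
    (81 : ℤ) ∣ (v ^ 2 - (⟨2, 1⟩ : ℤ√2) * u ^ 2).norm := by
  obtain ⟨b, hb⟩ := sq_dvd_norm_of_inert (q := 3) (by decide) h
  obtain ⟨v0, v1⟩ := v
  obtain ⟨u0, u1⟩ := u
  rw [Zsqrtd.ext_iff] at hb
  simp only [sq] at hb
  simp at hb
  have dec : ∀ a b e f : ZMod 3, a * a + 2 * b * b - (2 * (e * e + 2 * f * f) + 2 * (e * f + f * e)) = 0 →
      a * b + b * a - (2 * (e * f + f * e) + (e * e + 2 * f * f)) = 0 →
      a = 0 ∧ b = 0 ∧ e = 0 ∧ f = 0 := by decide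
  have h1 := congrArg (Int.cast : ℤ → ZMod 3) hb.1
  have h2 := congrArg (Int.cast : ℤ → ZMod 3) hb.2
  have h30 : (3 : ZMod 3) = 0 := rfl
  push_cast at h1 h2
  rw [h30, zero_mul] at h1 h2
  obtain ⟨r1, r2, r3, r4⟩ := dec _ _ _ _ h1 h2
  have hd : ∀ x : ℤ, (x : ZMod 3) = 0 → ∃ y, x = 3 * y := fun x hx =>
    (ZMod.intCast_zmod_eq_zero_iff_dvd x 3).1 hx
  obtain ⟨a, rfl⟩ := hd _ r1
  obtain ⟨b', rfl⟩ := hd _ r2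
  obtain ⟨e, rfl⟩ := hd _ r3
  obtain ⟨f, rfl⟩ := hd _ r4
  have : ((⟨3 * a, 3 * b'⟩ : ℤ√2) ^ 2 - (⟨2, 1⟩ : ℤ√2) * ⟨3 * e, 3 * f⟩ ^ 2) =
      ((9 : ℕ) : ℤ√2) * (⟨a, b'⟩ ^ 2 - ⟨2, 1⟩ * ⟨e, f⟩ ^ 2) := by
    have e1 : (⟨3 * a, 3 * b'⟩ : ℤ√2) = 3 * ⟨a, b'⟩ := by ext <;> simp
    have e2 : (⟨3 * e, 3 * f⟩ : ℤ√2) = 3 * ⟨e, f⟩ := by ext <;> simp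
    rw [e1, e2]
    push_cast
    ring
  rw [this, norm_natCast_mul]
  exact ⟨_, by push_cast; norm_num; rfl⟩

/-- `2 + √2` is not a square modulo either prime above `7`. -/
lemma norm_form_seven {v u : ℤ√2} (h : (7 : ℤ) ∣ (v ^ 2 - (⟨2, 1⟩ : ℤ√2) * u ^ 2).norm) :
    (49 : ℤ) ∣ (v ^ 2 - (⟨2, 1⟩ : ℤ√2) * u ^ 2).norm := by
  have fin : ∀ ρ v₁ u₁ : ℤ√2, ρ.norm = 7 → v = ρ * v₁ → u = ρ * u₁ →
      (49 : ℤ) ∣ (v ^ 2 - (⟨2, 1⟩ : ℤ√2) * u ^ 2).norm := by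
    rintro ρ v₁ u₁ hρ rfl rfl
    have : (ρ * v₁) ^ 2 - (⟨2, 1⟩ : ℤ√2) * (ρ * u₁) ^ 2 =
      ρ * ρ * (v₁ ^ 2 - ⟨2, 1⟩ * u₁ ^ 2) := by ring
    rw [this, Zsqrtd.norm_mul, Zsqrtd.norm_mul, hρ]
    exact ⟨_, rfl⟩
  have lift1 : ∀ a : ℤ√2, (7 : ℤ) ∣ a.re - 3 * a.im → ∃ b, a = ⟨3, 1⟩ * b := by
    rintro a ⟨k, hk⟩
    refine ⟨⟨a.im + 3 * k, -k⟩, ?_⟩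
    ext
    · simp; linarith
    · simp
  have lift2 : ∀ a : ℤ√2, (7 : ℤ) ∣ a.re + 3 * a.im → ∃ b, a = ⟨3, -1⟩ * b := by
    rintro a ⟨k, hk⟩
    refine ⟨⟨-a.im + 3 * k, k⟩, ?_⟩
    ext
    · simp; linarith
    · simp
  have dec1 : ∀ x y : ZMod 7, x * x - 5 * (y * y) = 0 → x = 0 ∧ y = 0 := by decide
  have dec2 : ∀ x y : ZMod 7, x * x + 1 * (y * y) = 0 → x = 0 ∧ y = 0 := by decide
  have h7 : (7 : ZMod 7) = 0 := rfl
  have hm3 : (-3 : ZMod 7) * -3 = ((2 : ℤ) : ZMod 7) := by decide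
  have : Fact (Nat.Prime 7) := ⟨by norm_num⟩
  have hz := (ZMod.intCast_zmod_eq_zero_iff_dvd _ 7).2 h
  have hcomp : (((v ^ 2 - (⟨2, 1⟩ : ℤ√2) * u ^ 2).norm : ℤ) : ZMod 7) =
      ((v.re + 3 * v.im : ZMod 7) * (v.re + 3 * v.im) -
        5 * ((u.re + 3 * u.im : ZMod 7) * (u.re + 3 * u.im))) *
      ((v.re - 3 * v.im : ZMod 7) * (v.re - 3 * v.im) +
        1 * ((u.re - 3 * u.im : ZMod 7) * (u.re - 3 * u.im))) := by
    have hψ : ∀ a : ℤ√2, ((a.norm : ℤ) : ZMod 7) =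
        Zsqrtd.lift (R := ZMod 7) ⟨3, rfl⟩ a * Zsqrtd.lift (R := ZMod 7) ⟨-3, hm3⟩ a := by
      intro a
      have h3 : (3 : ZMod 7) * 3 = 2 := rfl
      rw [Zsqrtd.lift_apply_apply, Zsqrtd.lift_apply_apply, Zsqrtd.norm_def]
      push_cast
      linear_combination (a.im : ZMod 7) ^ 2 * h3
    rw [hψ, map_sub, map_sub, map_mul, map_mul, map_pow, map_pow, map_pow, map_pow]
    simp only [Zsqrtd.lift_apply_apply]
    have e1 : (2 : ℤ) + (1 : ℤ) * (3 : ZMod 7) = 5 := rfl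
    have e2 : (2 : ℤ) + (1 : ℤ) * (-3 : ZMod 7) = -1 := rfl
    rw [e1, e2]
    ring
  rw [hcomp, mul_eq_zero] at hz
  have cast1 : ∀ x y : ℤ, (x + 3 * y : ZMod 7) = 0 → (7 : ℤ) ∣ x + 3 * y := by
    intro x y h
    have := (ZMod.intCast_zmod_eq_zero_iff_dvd (x + 3 * y) 7).1 (by push_cast; exact h)
    exact this
  have cast2 : ∀ x y : ℤ, (x - 3 * y : ZMod 7) = 0 → (7 : ℤ) ∣ x - 3 * y := by
    intro x y h
    have := (ZMod.intCast_zmod_eq_zero_iff_dvd (x - 3 * y) 7).1 (by push_cast; exact h)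
    exact this
  rcases hz with hz | hz
  · obtain ⟨h1, h2⟩ := dec1 _ _ hz
    obtain ⟨v₁, hv⟩ := lift2 v (cast1 _ _ h1)
    obtain ⟨u₁, hu⟩ := lift2 u (cast1 _ _ h2)
    exact fin _ v₁ u₁ rfl hv hu
  · obtain ⟨h1, h2⟩ := dec2 _ _ hz
    obtain ⟨v₁, hv⟩ := lift1 v (cast2 _ _ h1)
    obtain ⟨u₁, hu⟩ := lift1 u (cast2 _ _ h2)
    exact fin _ v₁ u₁ rfl hv hu

/-- If `2 + √2` is a square modulo `π`, then `-π` is a norm from `ℚ(√(2 + √2))`. The cofactor `κ`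
left by Minkowski's theorem has norm less than `12` in absolute value, and the odd primes
below `12` cannot divide its norm, so it is a unit times a power of `√2`. -/
lemma isForm_neg_of_isSquare {p : ℕ} (hp : p.Prime) (hp17 : 17 ≤ p) {π : ℤ√2} (hN : π.norm = p)
    {φ : ℤ√2 →+* ZMod p} (hφ : ∀ a, φ a = 0 ↔ π ∣ a) (hsq : IsSquare (φ ⟨2, 1⟩)) :
    IsForm (-π) := by
  obtain ⟨v, u, hvu, ⟨κ, hκ⟩, hlt⟩ := exists_small_form hp hφ hsq
  have hN2 := congrArg Zsqrtd.norm hκ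
  rw [Zsqrtd.norm_mul, hN] at hN2
  have hκ0 : κ ≠ 0 := by
    rintro rfl
    rw [mul_zero, sub_eq_zero] at hκ
    have h1 := congrArg Zsqrtd.norm hκ
    have h2 : (⟨2, 1⟩ : ℤ√2).norm = 2 := rfl
    rw [sq, sq, Zsqrtd.norm_mul, Zsqrtd.norm_mul, Zsqrtd.norm_mul, h2] at h1
    have h3 : u.norm = 0 := by
      by_contra h
      have hp2 : padicValInt 2 (v.norm * v.norm) = padicValInt 2 (2 * (u.norm * u.norm)) := by
        rw [h1]
      have hself : padicValInt 2 2 = 1 := padicValInt.self one_lt_two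
      have hv : v.norm ≠ 0 := by
        intro h0
        rw [h0] at h1
        have := mul_self_pos.2 h
        omega
      rw [padicValInt.mul hv hv, padicValInt.mul two_ne_zero (mul_ne_zero h h),
        padicValInt.mul h h, hself] at hp2
      omega
    have hu := (norm_eq_zero_iff_two u).1 h3
    rw [h3] at h1
    have hv := (norm_eq_zero_iff_two v).1 (by nlinarith)
    exact hvu.elim (fun h => h hv) (fun h => h hu)
  have hκn : κ.norm ≠ 0 := fun h => hκ0 ((norm_eq_zero_iff_two κ).1 h)
  have hκlt : |κ.norm| < 12 := by
    rw [hN2, abs_mul, Nat.abs_cast] at hlt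
    have : (0 : ℤ) < p := by exact_mod_cast hp.pos
    nlinarith
  have hcop : ∀ q : ℕ, q.Prime → q < 17 → IsCoprime ((q : ℤ) ^ 4) p := fun q hq hq17 => by
    apply IsCoprime.pow_left
    rw [Nat.isCoprime_iff_coprime, Nat.coprime_primes hq hp]
    omega
  have hsmall : ∀ m : ℤ, 12 ≤ m → ¬ m ∣ κ.norm := by
    intro m hm h
    have := Int.le_of_dvd (abs_pos.2 hκn) ((dvd_abs _ _).2 h)
    omega
  have h3 : ¬ (3 : ℤ) ∣ κ.norm := by
    intro h
    have h1 := norm_form_three (v := v) (u := u) (by rw [hN2]; exact h.mul_left _)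
    rw [hN2] at h1
    exact hsmall 81 (by norm_num) ((hcop 3 (by norm_num) (by norm_num)).dvd_of_dvd_mul_left h1)
  have h7 : ¬ (7 : ℤ) ∣ κ.norm := by
    intro h
    have h1 := norm_form_seven (v := v) (u := u) (by rw [hN2]; exact h.mul_left _)
    rw [hN2] at h1
    refine hsmall 49 (by norm_num) (IsCoprime.dvd_of_dvd_mul_left
      ((hcop 7 (by norm_num) (by norm_num)).of_isCoprime_of_dvd_left ⟨49, by norm_num⟩) h1)
  have h5 : ¬ (5 : ℤ) ∣ κ.norm := by
    intro h
    obtain ⟨b, rfl⟩ := sq_dvd_norm_of_inert (q := 5) (by decide) h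
    exact hsmall 25 (by norm_num) ⟨b.norm, by rw [norm_natCast_mul]; norm_num⟩
  have h11 : ¬ (11 : ℤ) ∣ κ.norm := by
    intro h
    obtain ⟨b, rfl⟩ := sq_dvd_norm_of_inert (q := 11) (by decide) h
    exact hsmall 121 (by norm_num) ⟨b.norm, by rw [norm_natCast_mul]; norm_num⟩
  have hform : IsForm κ := by
    obtain ⟨m, hm⟩ : ∃ m, m = κ.norm.natAbs := ⟨_, rfl⟩
    have habs := abs_lt.1 hκlt
    have hm0 : m = 1 ∨ m = 2 ∨ m = 4 ∨ m = 8 := by omega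
    rcases hm0 with h | h | h | h
    · exact isForm_of_norm_two_pow (k := 0) (by rw [← hm, h]; rfl)
    · exact isForm_of_norm_two_pow (k := 1) (by rw [← hm, h]; rfl)
    · exact isForm_of_norm_two_pow (k := 2) (by rw [← hm, h]; rfl)
    · exact isForm_of_norm_two_pow (k := 3) (by rw [← hm, h]; rfl)
  have hπκ : IsForm (π * κ) := ⟨1, v, u, one_ne_zero, by rw [hκ]; ring⟩
  apply IsForm.of_mul_sq hκ0
  have := (isForm_neg_one.mul hπκ).mul hform
  convert this using 1
  ring

/-! ### The class of the ideal above `√2` when `-π` is a norm from `ℚ(√(2 + √2))` -/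

namespace CMData
variable {O : Type*} [CommRing O] [IsDedekindDomain O] {c d : ℤ} (D : CMData O c d)

set_option linter.unusedSectionVars false

/-- If `(α)σ(α) = Iσ(I)`, then the class of `I` is a square: removing the common factor of `(α)` and
`I` leaves ideals `σ(B)` and `B`, so that `I` is equivalent to `B²`. -/
lemma exists_sq_of_norm_eq {α : O} (hα : α ≠ 0) {I : Ideal O} (hI : I ≠ ⊥)
    (h : Ideal.span {α} * (Ideal.span {α}).map (D.σ : O →+* O) = I * I.map (D.σ : O →+* O)) :
    ∃ g, g ^ 2 = cls I hI := by
  have hα' : Ideal.span {α} ≠ ⊥ := by rwa [Ne, Ideal.span_singleton_eq_bot]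
  obtain ⟨E, hE⟩ : ∃ E, E = Ideal.span {α} ⊔ I := ⟨_, rfl⟩
  have hE0 : E ≠ ⊥ := fun h0 => hI (le_bot_iff.1 (h0 ▸ hE ▸ le_sup_right))
  obtain ⟨A, hA⟩ : E ∣ Ideal.span {α} := Ideal.dvd_iff_le.2 (hE ▸ le_sup_left)
  obtain ⟨B, hB⟩ : E ∣ I := Ideal.dvd_iff_le.2 (hE ▸ le_sup_right)
  have hAB : IsCoprime A B := by
    rw [Ideal.isCoprime_iff_sup_eq]
    apply mul_left_cancel₀ (show E ≠ 0 from hE0)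
    rw [Ideal.mul_sup, ← hA, ← hB, ← hE, Ideal.mul_top]
  have hσAB : IsCoprime (A.map (D.σ : O →+* O)) (B.map (D.σ : O →+* O)) := by
    rw [Ideal.isCoprime_iff_sup_eq, ← Ideal.map_sup, Ideal.isCoprime_iff_sup_eq.1 hAB,
      Ideal.map_top]
  have hEE : E * E.map (D.σ : O →+* O) ≠ 0 := mul_ne_zero hE0 (D.map_σ_ne_bot hE0)
  have hprod : A * A.map (D.σ : O →+* O) = B * B.map (D.σ : O →+* O) := by
    apply mul_left_cancel₀ hEE
    rw [hA, hB, Ideal.map_mul, Ideal.map_mul] at h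
    calc _ = E * A * (E.map (D.σ : O →+* O) * A.map (D.σ : O →+* O)) := by ring
      _ = _ := h
      _ = _ := by ring
  have hAσB : A = B.map (D.σ : O →+* O) := by
    apply dvd_antisymm
    · exact hAB.dvd_of_dvd_mul_left (Dvd.intro _ hprod)
    · exact hσAB.symm.dvd_of_dvd_mul_right (Dvd.intro_left _ hprod.symm)
  have hB0 : B ≠ ⊥ := by
    rintro rfl
    exact hI (by rw [hB, Ideal.mul_bot])
  refine ⟨cls B hB0, ?_⟩
  subst hAσB
  have h1 := D.cls_mul_cls_map_σ hB0
  have h2 : cls E hE0 * cls (B.map (D.σ : O →+* O)) (D.map_σ_ne_bot hB0) = 1 := by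
    rw [← cls_mul _ _ (hA ▸ hα'), cls_eq_one_iff]
    exact ⟨α, hA.symm⟩
  have h3 : cls E hE0 = cls B hB0 := mul_right_cancel (h2.trans h1.symm)
  subst hB
  rw [cls_mul hE0 hB0, h3, sq]

/-- If `-π` is a norm from `ℚ(√(2 + √2))`, then `2 + √2` is a relative norm from the field, and the
class of the ideal above `√2` is a square. -/
lemma exists_sq_eq_cls (hpos : TotPos (⟨c, 4 * d⟩ : ℤ√2)) (hform : IsForm (-⟨c, 4 * d⟩))
    {J : Ideal O} (hJ : J ≠ ⊥) (hJs : J ^ 2 = Ideal.span {D.ι ⟨0, 1⟩}) :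
    ∃ g, g ^ 2 = cls J hJ := by
  obtain ⟨e, x, y, he, h⟩ := hform
  have h' : x ^ 2 + ⟨c, 4 * d⟩ * e ^ 2 = ⟨2, 1⟩ * y ^ 2 := by linear_combination -h
  have hy : y ≠ 0 := by
    rintro rfl
    have h1 := congrArg realPlace h'
    have h2 := (hpos.mul (totPos_sq he)).1
    rw [map_add, map_pow, zero_pow two_ne_zero, mul_zero, map_zero] at h1
    nlinarith [sq_nonneg (realPlace x)]
  obtain ⟨α, hα⟩ : ∃ α, α = D.ι x + D.ι e * D.Z := ⟨_, rfl⟩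
  have hασ : α * D.σ α = D.ι (⟨2, 1⟩ * y ^ 2) := by
    rw [← h', hα, map_add, map_mul, D.σ_ι, D.σ_ι, D.σ_Z, map_add, map_mul, map_pow, map_pow]
    linear_combination -D.ι e ^ 2 * D.Z_sq
  have hα0 : α ≠ 0 := by
    rintro h0
    rw [h0, zero_mul, eq_comm] at hασ
    exact D.ι_ne_zero (mul_ne_zero (by decide) (pow_ne_zero 2 hy)) hασ
  have hyJ : Ideal.span {D.ι y} * J ≠ ⊥ := by
    refine mul_ne_zero ?_ hJ
    rw [Ne, Ideal.zero_eq_bot, Ideal.span_singleton_eq_bot]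
    exact D.ι_ne_zero hy
  have hspan : Ideal.span {D.ι (⟨2, 1⟩ : ℤ√2)} = Ideal.span {D.ι (⟨0, 1⟩ : ℤ√2)} := by
    have hu : IsUnit (⟨1, 1⟩ : ℤ√2) := (isUnit_iff_norm _).2 (Or.inr rfl)
    rw [show (⟨2, 1⟩ : ℤ√2) = ⟨0, 1⟩ * ⟨1, 1⟩ from rfl, map_mul,
      Ideal.span_singleton_mul_right_unit (hu.map D.ι)]
  obtain ⟨g, hg⟩ := D.exists_sq_of_norm_eq hα0 hyJ (by
    rw [D.map_σ_span, Ideal.span_singleton_mul_span_singleton, hασ, Ideal.map_mul, D.map_σ_span,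
      D.σ_ι, D.map_σ_of_sq_eq hJs, map_mul, map_pow, ← Ideal.span_singleton_mul_span_singleton,
      hspan, ← hJs, ← Ideal.span_singleton_pow]
    ring)
  refine ⟨g, ?_⟩
  have hy' : Ideal.span {D.ι y} ≠ ⊥ := left_ne_zero_of_mul hyJ
  rw [hg, cls_mul hy' hJ, cls_span, one_mul]

end CMData

/-! ### Finite abelian groups with at most one involution -/

section TwoGroup

variable {G : Type*} [CommGroup G]

/-- If squaring has at most two elements in its kernel, it is at most two-to-one, so the
`2 ^ k`-torsion has at most `2 ^ k` elements. -/
lemma card_two_pow_torsion_le [Fintype G] [DecidableEq G] {t : G}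
    (h : ∀ g : G, g ^ 2 = 1 → g = 1 ∨ g = t) (k : ℕ) :
    (Finset.univ.filter fun a : G => a ^ 2 ^ k = 1).card ≤ 2 ^ k := by
  induction k with
  | zero => simp [Finset.filter_eq']
  | succ k ih =>
    have key := Finset.card_le_mul_card_image_of_maps_to
      (s := Finset.univ.filter fun a : G => a ^ 2 ^ (k + 1) = 1)
      (t := Finset.univ.filter fun a : G => a ^ 2 ^ k = 1) (f := fun a => a ^ 2)
      (by
        intro a ha
        simp only [Finset.mem_filter, Finset.mem_univ, true_and] at ha ⊢
        rw [← pow_mul, ← pow_succ', ha]) 2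
      (by
        intro b _
        by_cases hb : ∃ a0 : G, a0 ^ 2 = b
        · obtain ⟨a0, rfl⟩ := hb
          refine (Finset.card_le_card (t := {a0, a0 * t}) ?_).trans Finset.card_le_two
          intro a ha
          simp only [Finset.mem_filter, Finset.mem_univ, true_and] at ha
          have h1 : (a0⁻¹ * a) ^ 2 = 1 := by rw [mul_pow, ha.2, inv_pow, inv_mul_cancel]
          rcases h _ h1 with h2 | h2
          · simp [(inv_mul_eq_one.1 h2)]
          · simp [← h2]
        · rw [Finset.filter_eq_empty_iff.2 fun {a} _ ha => hb ⟨a, ha⟩]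
          simp)
    calc _ ≤ _ := key
      _ ≤ 2 * 2 ^ k := by gcongr
      _ = _ := (pow_succ' 2 k).symm

variable [Finite G]

lemma IsPGroup.isCyclic_of_two_torsion (hG : IsPGroup 2 G) {t : G}
    (h : ∀ g : G, g ^ 2 = 1 → g = 1 ∨ g = t) : IsCyclic G := by
  classical
  have := Fintype.ofFinite G
  refine isCyclic_of_card_pow_eq_one_le fun n hn => ?_
  obtain ⟨k, m, hm, rfl⟩ := Nat.exists_eq_two_pow_mul_odd hn.ne'
  refine (Finset.card_le_card ?_).trans ((card_two_pow_torsion_le h k).trans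
    (Nat.le_mul_of_pos_right _ hm.pos))
  intro a ha
  simp only [Finset.mem_filter, Finset.mem_univ, true_and] at ha ⊢
  obtain ⟨j, hj⟩ := (IsPGroup.iff_orderOf.1 hG) a
  have h1 := orderOf_dvd_of_pow_eq_one ha
  apply orderOf_dvd_iff_pow_eq_one.1
  rw [hj] at h1 ⊢
  exact (Nat.Coprime.pow_left j (Nat.coprime_two_left.2 hm)).dvd_of_dvd_mul_right h1

lemma Sylow.isCyclic_of_two_torsion {t : G} (h : ∀ g : G, g ^ 2 = 1 → g = 1 ∨ g = t)
    (P : Sylow 2 G) : IsCyclic P := by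
  by_cases ht : t ∈ P
  · refine IsPGroup.isCyclic_of_two_torsion P.2 (t := ⟨t, ht⟩) fun g hg => ?_
    rcases h g (by simpa using congrArg Subtype.val hg) with h1 | h1
    · exact Or.inl (Subtype.ext h1)
    · exact Or.inr (Subtype.ext h1)
  · refine IsPGroup.isCyclic_of_two_torsion P.2 (t := 1) fun g hg => ?_
    rcases h g (by simpa using congrArg Subtype.val hg) with h1 | h1
    · exact Or.inl (Subtype.ext h1)
    · exact absurd (h1 ▸ g.2) ht

lemma Sylow.card_eq_one_of_two_torsion (h : ∀ g : G, g ^ 2 = 1 → g = 1)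
    (P : Sylow 2 G) : Nat.card P = 1 := by
  obtain ⟨n, hn⟩ := IsPGroup.iff_card.1 P.2
  rcases n.eq_zero_or_pos with rfl | hpos
  · simpa using hn
  · have h2 : 2 ∣ Nat.card P := hn ▸ dvd_pow_self 2 hpos.ne'
    obtain ⟨x, hx⟩ := exists_prime_orderOf_dvd_card' 2 h2
    have h1 : (x : G) ^ 2 = 1 := by
      have := pow_orderOf_eq_one x
      rw [hx] at this
      simpa using congrArg Subtype.val this
    have : x = 1 := Subtype.ext (h _ h1)
    simp [this] at hx

/-- An element whose order is a power `2 ^ n` forces `2 ^ n` to divide the order of every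
Sylow 2-subgroup. -/
lemma Sylow.two_pow_dvd_card (P : Sylow 2 G) {b : G} {n : ℕ} (hb : orderOf b = 2 ^ n) :
    2 ^ n ∣ Nat.card P :=
  P.pow_dvd_card_of_pow_dvd_card (hb ▸ orderOf_dvd_natCard b)

lemma Sylow.card_eq_two {t : G} (h : ∀ g : G, g ^ 2 = 1 → g = 1 ∨ g = t) (ht1 : t ≠ 1)
    (ht2 : t ^ 2 = 1) (ht : ∀ g : G, g ^ 2 ≠ t) (P : Sylow 2 G) : Nat.card P = 2 := by
  have hd : 2 ^ 1 ∣ Nat.card P :=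
    P.two_pow_dvd_card (b := t) (by rw [pow_one]; exact orderOf_eq_prime ht2 ht1)
  have := P.isCyclic_of_two_torsion h
  obtain ⟨n, hn⟩ := IsPGroup.iff_card.1 P.2
  obtain ⟨x, hx⟩ := IsCyclic.exists_generator (α := P)
  have hox : orderOf x = 2 ^ n := by rw [← hn]; exact orderOf_eq_card_of_forall_mem_zpowers hx
  rw [hn] at hd ⊢
  have hn1 : 1 ≤ n := (Nat.pow_dvd_pow_iff_le_right (by norm_num)).1 hd
  rcases hn1.lt_or_eq with hn2 | hn2
  · exfalso
    -- the involution of the cyclic group is `x ^ 2 ^ (n - 1)`, a square once `n ≥ 2`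
    obtain ⟨m, rfl⟩ : ∃ m, n = m + 2 := ⟨n - 2, by omega⟩
    have hox' : orderOf (x : G) = 2 ^ (m + 2) := by rw [← hox]; exact Subgroup.orderOf_coe x
    apply ht ((x : G) ^ 2 ^ m)
    have e1 : (((x : G) ^ 2 ^ m) ^ 2) ^ 2 = 1 := by
      rw [← pow_mul, ← pow_mul, show 2 ^ m * (2 * 2) = 2 ^ (m + 2) by ring, ← hox',
        pow_orderOf_eq_one]
    rcases h _ e1 with h1 | h1
    · rw [← pow_mul, ← pow_succ] at h1
      have := Nat.le_of_dvd (by positivity) (orderOf_dvd_of_pow_eq_one h1)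
      rw [hox'] at this
      have := (Nat.pow_le_pow_iff_right (by norm_num : 1 < 2)).1 this
      omega
    · exact h1
  · rw [← hn2, pow_one]

lemma Sylow.four_le_card {t b : G} (ht1 : t ≠ 1) (ht2 : t ^ 2 = 1) (hb : b ^ 2 = t)
    (P : Sylow 2 G) : 4 ≤ Nat.card P := by
  have hob : orderOf b = 2 ^ 2 := by
    have := orderOf_eq_prime_pow (x := b) (p := 2) (n := 1) (by simpa [hb] using ht1)
      (by rw [show 2 ^ (1 + 1) = 2 * 2 by norm_num, pow_mul, hb, ht2])
    simpa using this
  exact Nat.le_of_dvd Nat.card_pos (P.two_pow_dvd_card hob)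

end TwoGroup

/-! ### The field `K` as a quadratic extension of `ℚ(√2)` -/

/-- The embedding of `ℤ[√2]` in `ℂ` with `√2 > 0`. -/
def complexPlace : ℤ√2 →+* ℂ := Complex.ofRealHom.comp realPlace

lemma complexPlace_apply (a : ℤ√2) : complexPlace a = (realPlace a : ℂ) := rfl

lemma complexPlace_injective : Function.Injective complexPlace :=
  Complex.ofReal_injective.comp realPlace_injective

lemma complexPlace_pi (c d : ℤ) :
    complexPlace ⟨c, 4 * d⟩ = (c : ℂ) + 4 * (d : ℂ) * (Real.sqrt 2 : ℂ) := by
  rw [complexPlace_apply, realPlace_apply]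
  push_cast
  ring

/-- `ℤ[√2]` is integrally closed: an algebraic integer of `ℚ(√2)` lies in `ℤ[√2]`. -/
lemma exists_complexPlace_eq {x : ℂ} (hx : IsIntegral ℤ x) {n : ℤ} (hn : n ≠ 0) {a : ℤ√2}
    (h : (n : ℂ) * x = complexPlace a) : ∃ b, complexPlace b = x := by
  let f : FractionRing (ℤ√2) →+* ℂ := IsFractionRing.lift complexPlace_injective
  have hf : ∀ b, f (algebraMap _ _ b) = complexPlace b := fun b =>
    IsFractionRing.lift_algebraMap complexPlace_injective b
  have hnC : (n : ℂ) ≠ 0 := Int.cast_ne_zero.2 hn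
  let y : FractionRing (ℤ√2) := algebraMap _ _ a / (n : FractionRing (ℤ√2))
  have hy : f y = x := by
    simp only [y, map_div₀, hf, map_intCast, ← h]
    field_simp
  have h1 : IsIntegral (ℤ√2) y := by
    obtain ⟨P, hP, hP0⟩ := hx
    refine ⟨P.map (Int.castRingHom (ℤ√2)), hP.map _, f.injective ?_⟩
    rw [Polynomial.hom_eval₂, Polynomial.eval₂_map, hy, map_zero, ← hP0]
    congr 1
    exact Subsingleton.elim _ _
  obtain ⟨b, hb⟩ := IsIntegrallyClosed.isIntegral_iff.1 h1
  exact ⟨b, by rw [← hf, hb, hy]⟩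

section Field

variable {c d : ℤ} {z : ℂ}

lemma isIntegral_sqrt_two : IsIntegral ℤ ((Real.sqrt 2 : ℝ) : ℂ) := by
  apply IsIntegral.of_pow two_pos
  rw [← Complex.ofReal_pow, Real.sq_sqrt zero_le_two]
  exact_mod_cast isIntegral_algebraMap (R := ℤ) (A := ℂ) (x := 2)

lemma isIntegral_complexPlace (a : ℤ√2) : IsIntegral ℤ (complexPlace a) := by
  rw [complexPlace_apply, realPlace_apply]
  push_cast
  exact (isIntegral_algebraMap (x := a.re)).add
    ((isIntegral_algebraMap (x := a.im)).mul isIntegral_sqrt_two)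

lemma isIntegral_z (hz : z ^ 2 = -complexPlace ⟨c, 4 * d⟩) : IsIntegral ℤ z := by
  apply IsIntegral.of_pow two_pos
  rw [hz]
  exact (isIntegral_complexPlace _).neg

lemma isIntegral_z_rat (hz : z ^ 2 = -complexPlace ⟨c, 4 * d⟩) : IsIntegral ℚ z := (isIntegral_z hz).tower_top

lemma numberField_Kfield (hz : z ^ 2 = -complexPlace ⟨c, 4 * d⟩) : NumberField (Kfield z) :=
  have : FiniteDimensional ℚ (Kfield z) := adjoin.finiteDimensional (isIntegral_z_rat hz)
  ⟨⟩

/-- `z` is purely imaginary, since `z ^ 2` is a negative real number. -/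
lemma conj_z (hc : 0 < c) (hd : 0 < d) (hz : z ^ 2 = -complexPlace ⟨c, 4 * d⟩) :
    (starRingEnd ℂ) z = -z := by
  have h : ((starRingEnd ℂ) z) ^ 2 = z ^ 2 := by
    rw [← map_pow, hz, map_neg, complexPlace_apply, Complex.conj_ofReal]
  rcases sq_eq_sq_iff_eq_or_eq_neg.1 h with h | h
  · exfalso
    obtain ⟨r, rfl⟩ := Complex.conj_eq_iff_real.1 h
    rw [complexPlace_apply] at hz
    have h1 : r ^ 2 = -realPlace ⟨c, 4 * d⟩ := by exact_mod_cast hz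
    rw [realPlace_apply] at h1
    have hc' : (0 : ℝ) < c := by exact_mod_cast hc
    have hd' : (0 : ℝ) < d := by exact_mod_cast hd
    have : (0 : ℝ) < c + (4 * d : ℤ) * Real.sqrt 2 := by push_cast; positivity
    simp only at h1
    nlinarith [sq_nonneg r]
  · exact h

lemma sqrt_two_mem (hd : 0 < d) (hz : z ^ 2 = -complexPlace ⟨c, 4 * d⟩) :
    ((Real.sqrt 2 : ℝ) : ℂ) ∈ Kfield z := by
  have hzm : z ∈ Kfield z := mem_adjoin_simple_self ℚ z
  rw [complexPlace_pi] at hz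
  have hd' : (d : ℂ) ≠ 0 := Int.cast_ne_zero.2 hd.ne'
  have : ((Real.sqrt 2 : ℝ) : ℂ) = (-z ^ 2 - (c : ℂ)) / (4 * (d : ℂ)) := by
    rw [hz]
    field_simp
    ring
  rw [this]
  exact div_mem (sub_mem (neg_mem (pow_mem hzm 2)) (intCast_mem _ c))
    (mul_mem (ofNat_mem _ 4) (intCast_mem _ d))

lemma conj_mem (hc : 0 < c) (hd : 0 < d) (hz : z ^ 2 = -complexPlace ⟨c, 4 * d⟩)
    {x : ℂ} (hx : x ∈ Kfield z) : (starRingEnd ℂ) x ∈ Kfield z := by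
  have h : Kfield z ≤ (Kfield z).comap (Complex.conjAe.restrictScalars ℚ : ℂ ≃ₐ[ℚ] ℂ).toAlgHom := by
    refine adjoin_simple_le_iff.2 ?_
    change (starRingEnd ℂ) z ∈ Kfield z
    rw [conj_z hc hd hz]
    exact neg_mem (mem_adjoin_simple_self ℚ z)
  exact h hx

/-- Every element of `K` is of the form `(a + b z) / n` with `a, b ∈ ℤ[√2]`. -/
lemma exists_coords_Kfield (hz : z ^ 2 = -complexPlace ⟨c, 4 * d⟩) {x : ℂ} (hx : x ∈ Kfield z) :
    ∃ n : ℤ, n ≠ 0 ∧ ∃ a b, (n : ℂ) * x = complexPlace a + complexPlace b * z := by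
  have hx' : x ∈ Algebra.adjoin ℚ {z} := by
    rw [← adjoin_simple_toSubalgebra_of_isAlgebraic (isIntegral_z_rat hz).isAlgebraic]
    exact hx
  clear hx
  induction hx' using Algebra.adjoin_induction with
  | mem x hx =>
    obtain rfl : x = z := hx
    exact ⟨1, one_ne_zero, 0, 1, by simp⟩
  | algebraMap r =>
    refine ⟨r.den, by exact_mod_cast r.den_nz, (r.num : ℤ√2), 0, ?_⟩
    simp only [map_intCast, map_zero, zero_mul, add_zero, eq_ratCast]
    have := r.den_mul_eq_num
    exact_mod_cast this
  | add x y _ _ hx hy =>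
    obtain ⟨n, hn, a, b, h⟩ := hx
    obtain ⟨m, hm, a', b', h'⟩ := hy
    refine ⟨n * m, mul_ne_zero hn hm, m * a + n * a', m * b + n * b', ?_⟩
    simp only [map_add, map_mul, map_intCast]
    push_cast
    linear_combination (m : ℂ) * h + (n : ℂ) * h'
  | mul x y _ _ hx hy =>
    obtain ⟨n, hn, a, b, h⟩ := hx
    obtain ⟨m, hm, a', b', h'⟩ := hy
    refine ⟨n * m, mul_ne_zero hn hm, a * a' - b * b' * ⟨c, 4 * d⟩, a * b' + b * a', ?_⟩
    simp only [map_add, map_sub, map_mul]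
    push_cast
    linear_combination (m : ℂ) * y * h + (complexPlace a + complexPlace b * z) * h' +
      complexPlace b * complexPlace b' * hz

end Field

/-- Complex conjugation on `K`. -/
def conjK {c d : ℤ} {z : ℂ} (hc : 0 < c) (hd : 0 < d) (hz : z ^ 2 = -complexPlace ⟨c, 4 * d⟩) :
    Kfield z ≃+* Kfield z where
  toFun x := ⟨(starRingEnd ℂ) x, conj_mem hc hd hz x.2⟩
  invFun x := ⟨(starRingEnd ℂ) x, conj_mem hc hd hz x.2⟩
  left_inv _ := Subtype.ext (Complex.conj_conj _)
  right_inv _ := Subtype.ext (Complex.conj_conj _)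
  map_mul' _ _ := Subtype.ext (map_mul _ _ _)
  map_add' _ _ := Subtype.ext (map_add _ _ _)

/-- The algebraic integer of `K` given by an algebraic integer of `ℂ` lying in `K`. -/
def mkInt {z x : ℂ} (hx : x ∈ Kfield z) (hi : IsIntegral ℤ x) : 𝓞 (Kfield z) :=
  ⟨⟨x, hx⟩, (isIntegral_algHom_iff ((Kfield z).val.restrictScalars ℤ) (Kfield z).val.injective).1 hi⟩

lemma mkInt_coe {z x : ℂ} (hx : x ∈ Kfield z) (hi : IsIntegral ℤ x) :
    ((mkInt hx hi : Kfield z) : ℂ) = x := rfl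

/-- The inclusion of the integers of `K` in `ℂ`. -/
def toC (z : ℂ) : 𝓞 (Kfield z) →+* ℂ :=
  (Kfield z).val.toRingHom.comp (algebraMap (𝓞 (Kfield z)) (Kfield z))

lemma toC_injective (z : ℂ) : Function.Injective (toC z) :=
  (Kfield z).val.injective.comp RingOfIntegers.coe_injective

lemma isIntegral_toC {z : ℂ} (x : 𝓞 (Kfield z)) : IsIntegral ℤ (toC z x) :=
  (RingOfIntegers.isIntegral_coe x).map ((Kfield z).val.restrictScalars ℤ)

/-- The inclusion of `ℤ[√2]` in the integers of `K`. -/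
def zsqrtIncl {d : ℤ} {c : ℤ} {z : ℂ} (hd : 0 < d) (hz : z ^ 2 = -complexPlace ⟨c, 4 * d⟩) :
    ℤ√2 →+* 𝓞 (Kfield z) :=
  Zsqrtd.lift ⟨mkInt (sqrt_two_mem hd hz) isIntegral_sqrt_two, by
    apply toC_injective
    change ((Real.sqrt 2 : ℝ) : ℂ) * ((Real.sqrt 2 : ℝ) : ℂ) = toC z ((2 : ℤ) : 𝓞 (Kfield z))
    rw [map_intCast, ← Complex.ofReal_mul, Real.mul_self_sqrt zero_le_two]
    norm_num⟩

lemma toC_zsqrtIncl {c d : ℤ} {z : ℂ} (hd : 0 < d) (hz : z ^ 2 = -complexPlace ⟨c, 4 * d⟩)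
    (a : ℤ√2) : toC z (zsqrtIncl hd hz a) = complexPlace a := by
  have : (toC z).comp (zsqrtIncl hd hz) = complexPlace := by
    apply Zsqrtd.hom_ext
    simp only [RingHom.comp_apply, complexPlace_apply, realPlace_apply, zsqrtIncl]
    simp
    rfl
  exact congrArg (fun f => f a) this

/-- The integers of `K`, with complex conjugation, form an instance of `CMData`. -/
def cmData {c d : ℤ} {z : ℂ} (hc : 0 < c) (hd : 0 < d) (hz : z ^ 2 = -complexPlace ⟨c, 4 * d⟩) :
    CMData (𝓞 (Kfield z)) c d where
  ι := zsqrtIncl hd hz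
  σ := RingOfIntegers.mapRingEquiv (conjK hc hd hz)
  Z := mkInt (mem_adjoin_simple_self ℚ z) (isIntegral_z hz)
  ι_inj a b h := complexPlace_injective (by
    rw [← toC_zsqrtIncl hd hz, ← toC_zsqrtIncl hd hz, h])
  σ_σ x := toC_injective z (Complex.conj_conj _)
  σ_ι a := toC_injective z (by
    change (starRingEnd ℂ) (toC z (zsqrtIncl hd hz a)) = _
    rw [toC_zsqrtIncl, complexPlace_apply, Complex.conj_ofReal])
  σ_Z := toC_injective z (by
    rw [map_neg]
    exact conj_z hc hd hz)
  Z_sq := toC_injective z (by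
    rw [map_neg, map_pow, toC_zsqrtIncl]
    exact hz)
  fixed x hx := by
    have hx' : (starRingEnd ℂ) (toC z x) = toC z x := congrArg (toC z) hx
    obtain ⟨n, hn, a, b, h⟩ := exists_coords_Kfield hz (x := toC z x) (x : Kfield z).2
    have h' := congrArg (starRingEnd ℂ) h
    simp only [map_mul, map_add, map_intCast, hx', conj_z hc hd hz, complexPlace_apply,
      Complex.conj_ofReal] at h'
    rw [← complexPlace_apply, ← complexPlace_apply] at h'
    have h2 : (n : ℂ) * toC z x = complexPlace a := by linear_combination (h + h') / 2
    obtain ⟨b, hb⟩ := exists_complexPlace_eq (isIntegral_toC x) hn h2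
    exact ⟨b, toC_injective z (by rw [toC_zsqrtIncl, hb])⟩

/-! ### The Sylow 2-subgroup of the class group -/

theorem statement_13 (p : ℕ) (hp : p.Prime) (hp8 : p % 8 = 1)
    (c d : ℤ) (hc : 0 < c) (hd : 0 < d) (hcd : (p : ℤ) = c ^ 2 - 32 * d ^ 2)
    -- z = √(−π), π = c + 4d√2 :
    (z : ℂ) (hz : z ^ 2 = -((c : ℂ) + 4 * (d : ℂ) * (Real.sqrt 2 : ℂ))) :
    ∀ P : Sylow 2 (ClassGroup (𝓞 (Kfield z))),
      IsCyclic P ∧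
      ((2 : ZMod p) ^ ((p - 1) / 4) = -(-1 : ZMod p) ^ ((p - 1) / 8) →
        Nat.card P = 1) ∧
      (((2 : ZMod p) ^ ((p - 1) / 4) = -1 ∧ (-1 : ℤ) ^ ((p - 1) / 8) = -1) →
        Nat.card P = 2) ∧
      (((2 : ZMod p) ^ ((p - 1) / 4) = 1 ∧ (-1 : ℤ) ^ ((p - 1) / 8) = 1) →
        4 ≤ Nat.card P) := by
  intro P
  rw [← complexPlace_pi] at hz
  have := numberField_Kfield hz
  have := Fact.mk hp
  let D := cmData hc hd hz
  have hp17 : 17 ≤ p := by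
    by_contra! hlt
    have h19 : p = 1 ∨ p = 9 := by omega
    rcases h19 with rfl | rfl <;> norm_num at hp
  have hN : (⟨c, 4 * d⟩ : ℤ√2).norm = p := by rw [Zsqrtd.norm_def, hcd]; ring
  have hπ : Prime (⟨c, 4 * d⟩ : ℤ√2) := prime_of_norm_natAbs_prime (by rw [hN]; simpa using hp)
  have hpos : TotPos (⟨c, 4 * d⟩ : ℤ√2) :=
    totPos_of_re_pos hc (by rw [hN]; exact_mod_cast hp.pos)
  have hodd := odd_of_rep hp8 hcd
  have hc4 : c % 4 = 1 ∨ c % 4 = 3 := by omega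
  rcases hc4 with hc4 | hc4
  · -- `√2` ramifies, and the class of the prime `J` above it is the only involution
    obtain ⟨J, hJs⟩ := D.exists_sq_eq_sqrt_two hc4
    have hJ : J ≠ ⊥ := by
      rintro rfl
      rw [Ideal.bot_pow two_ne_zero, eq_comm, Ideal.span_singleton_eq_bot] at hJs
      exact D.ι_ne_zero prime_sqrt_two.ne_zero hJs
    have ht1 : cls J hJ ≠ 1 := D.not_principal hp hp17 hN hπ hpos hJ hJs
    have ht2 : cls J hJ ^ 2 = 1 := by
      have hJJ : J * J ≠ ⊥ := mul_ne_zero hJ hJ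
      rw [sq, ← cls_mul hJ hJ hJJ, cls_eq_one_iff]
      exact ⟨_, by rw [← sq, hJs]⟩
    have htor : ∀ g : ClassGroup (𝓞 (Kfield z)), g ^ 2 = 1 → g = 1 ∨ g = cls J hJ := by
      intro g hg
      rcases D.two_torsion hπ hpos g hg with h | ⟨-, I, hI, hIs, h⟩
      · exact Or.inl h
      · obtain rfl := ideal_eq_of_sq_eq (hIs.trans hJs.symm)
        exact Or.inr h
    obtain ⟨φ, hφ⟩ := exists_residue_hom hp hp8 hcd
    have hsq := isSquare_two_add_sqrt hp hp8 hd hcd hφ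
    refine ⟨P.isCyclic_of_two_torsion htor, fun h => ?_, fun h => ?_, fun h => ?_⟩
    · have := mod_four_of_symbols_ne hp hp8 hc hd hcd h
      omega
    · have h5 := mod_eight_of_symbols_neg hp hp8 hc hd hcd h.1 h.2
      exact P.card_eq_two htor ht1 ht2
        (D.not_sq hπ hpos hφ (fun h => by have := hsq.1 h; omega) hJ hJs)
    · have h1 := mod_eight_of_symbols_one hp hp8 hc hd hcd h.1 h.2
      obtain ⟨b, hb⟩ := D.exists_sq_eq_cls hpos
        (isForm_neg_of_isSquare hp hp17 hN hφ (hsq.2 (Or.inl h1))) hJ hJs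
      exact P.four_le_card ht1 ht2 hb
  · have htor : ∀ g : ClassGroup (𝓞 (Kfield z)), g ^ 2 = 1 → g = 1 := by
      intro g hg
      rcases D.two_torsion hπ hpos g hg with h | ⟨h, -⟩
      · exact h
      · exact absurd hc4 h
    refine ⟨P.isCyclic_of_two_torsion (t := 1) fun g hg => Or.inl (htor g hg),
      fun _ => P.card_eq_one_of_two_torsion htor, fun h => ?_, fun h => ?_⟩
    · have := mod_eight_of_symbols_neg hp hp8 hc hd hcd h.1 h.2
      omega
    · have := mod_eight_of_symbols_one hp hp8 hc hd hcd h.1 h.2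
      omega
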